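/- Let f : ℝ^d → ℝ be thrice differentiable, L-smooth and σ-strongly convex with 0 < σ < L, with every third partial derivative bounded in absolute value by M < ∞, and let x* be its unique minimizer. Let ν be a probability law on ℝ^d with mean 0, symmetric positive definite covariance Σ, and finite third absolute moment. Let H := ∇²f(x*) and let Σ_Y be the unique positive definite solution of HΣ_Y + Σ_Y Hᵀ = Σ; let γ be the centered Gaussian law on ℝ^d with covariance Σ_Y. Then there exist α' > 0 and finite constants U₁, U₁' such that for every α ∈ (0,α'): the SGD chain X_{k+1} = X_k + α(−∇f(X_k) + ξ_k), with ξ_k i.i.d. ∼ ν, admits a unique invariant probability measure μ_α (invariance meaning: X ∼ μ_α and ξ ∼ ν independent imply X + α(−∇f(X) + ξ) ∼ μ_α), and, writing π_α for the law of (X − x*)/√α under μ_α: (i) for every 1-Lipschitz h : ℝ^d → ℝ, |∫h dπ_α − ∫h dγ| ≤ U₁ · α^{1/2} log(1/α); (ii) for every ζ ∈ ℝ^d with ‖ζ‖ = 1 and every a > 0, |π_α{y : ⟨y, ζ⟩ > a} − P(Z_ζ > a)| ≤ U₁' · α^{1/4}(log(1/α))^{1/2}/a, where Z_ζ is a real Gaussian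 random variable with mean 0 and variance ζᵀΣ_Yζ. -/

import Mathlib

/-!
In the rescaled variable `y = (x - x*) / √α` the chain reads `y ↦ T y + √α ξ`, where `T` contracts
by a factor `1 - O(α)` and differs from the linear map `A = I - αH` by `O(α^{3/2} ‖y‖²)`.

*Invariant law.* The contraction comes from cocoercivity of the gradient (`step_contract`).
Existence is a fixed point argument in `L²` of the sequence of noises (`exists_invariant`),
uniqueness a coupling with shared noise (`coupling`, `invariant_unique`). The second moment of the
rescaled law is bounded uniformly in `α` (`second_moment`).

*Wasserstein bound.* By the Lyapunov equation, `N(0, Σ_Y)` is invariant for the linear chain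
`y ↦ A y + N` with Gaussian steps `N` of covariance `Σ_Y - A Σ_Y A = αΣ - α² H Σ_Y H`. Starting
from the stationary law, the steps of the SGD chain are replaced one at a time, the most recent
first, by steps of the linear Gaussian chain (`tele_step`, `tele_sum`). When a step is replaced,
the later ones are already Gaussian, and their `k`-step noise smooths the test function: by the
Cameron–Martin formula all derivatives fall on the Gaussian density, so a `1`-Lipschitz function
acquires a third-order Taylor expansion with explicit remainder (`smooth_taylor`). The two kinds of
noise share their mean and almost their covariance, so the `k`-th replacement costs `O(√α / k)`
(`kernel_match`, `stepErr_le`), while the linearisation errors form a geometric series of total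
size `O(√α)`. After `O(α⁻²)` replacements the memory of the initial law is negligible, and
the harmonic sum produces the factor `log (1/α)` (`rate`, `wass_const`).

*Tails.* The indicator of a half-line `{⟨y, ζ⟩ > a}` is sandwiched between ramps of width `a s`,
and the Gaussian density is `O(1 / a²)` beyond `a / 2`. The Wasserstein bound `w = √α log (1/α)`
then gives an error of order `(w / s + s) / a`, and `s` proportional to `√w` is the best choice
(`tail_bound`).
-/

open MeasureTheory Matrix
open scoped RealInnerProductSpace NNReal

namespace SGD

open ProbabilityTheory

/-! ### The standard Gaussian: density, translation formula, exponential moments -/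

section Gauss

/-- Normalizing constant of the standard Gaussian density `z ↦ c · exp (-‖z‖² / 2)` on `V`. -/
noncomputable def gaussConst (V : Type*) [NormedAddCommGroup V] [InnerProductSpace ℝ V] : ℝ :=
  ((2 * Real.pi) ^ ((Module.finrank ℝ V : ℝ) / 2))⁻¹

lemma gaussConst_nonneg {V : Type*} [NormedAddCommGroup V] [InnerProductSpace ℝ V] :
    0 ≤ gaussConst V := by unfold gaussConst; positivity

variable {V : Type*} [NormedAddCommGroup V] [InnerProductSpace ℝ V] [FiniteDimensional ℝ V]
  [MeasurableSpace V] [BorelSpace V]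

lemma integrable_gauss_density :
    Integrable (fun z : V => gaussConst V * Real.exp (-(1/2) * ‖z‖ ^ 2)) := by
  refine Integrable.const_mul ?_ _
  have := (GaussianFourier.integrable_cexp_neg_mul_sq_norm_add (V := V) (b := 1/2)
    (by norm_num) 0 0).re
  refine this.congr (Filter.Eventually.of_forall fun z => ?_)
  have h : (-(1/2 : ℂ) * (‖z‖ : ℂ) ^ 2 + 0 * ((inner ℝ (0 : V) z : ℝ) : ℂ))
      = ((-(1/2) * ‖z‖ ^ 2 : ℝ) : ℂ) := by push_cast; ring
  change (Complex.exp _).re = _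
  rw [h, Complex.exp_ofReal_re]

lemma integral_gauss_density :
    ∫ z : V, gaussConst V * Real.exp (-(1/2) * ‖z‖ ^ 2) = 1 := by
  rw [integral_const_mul, GaussianFourier.integral_rexp_neg_mul_sq_norm (by norm_num)]
  unfold gaussConst
  have : Real.pi / (1/2) = 2 * Real.pi := by ring
  rw [this]
  exact inv_mul_cancel₀ (by positivity)

lemma stdGaussian_eq_withDensity :
    stdGaussian V = (volume : Measure V).withDensity
      (fun z => ((gaussConst V * Real.exp (-(1/2) * ‖z‖ ^ 2)).toNNReal : ENNReal)) := by
  have hpos : ∀ z : V, 0 ≤ gaussConst V * Real.exp (-(1/2) * ‖z‖ ^ 2) :=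
    fun z => mul_nonneg gaussConst_nonneg (Real.exp_pos _).le
  have hfin : IsFiniteMeasure ((volume : Measure V).withDensity
      (fun z => ((gaussConst V * Real.exp (-(1/2) * ‖z‖ ^ 2)).toNNReal : ENNReal))) := by
    refine isFiniteMeasure_withDensity ?_
    have := (integrable_gauss_density (V := V)).lintegral_lt_top
    exact this.ne
  refine Measure.ext_of_charFun ?_
  ext t
  rw [charFun_stdGaussian, charFun_apply,
    integral_withDensity_eq_integral_smul (by fun_prop)]
  have h1 : ∀ z : V, (gaussConst V * Real.exp (-(1/2) * ‖z‖ ^ 2)).toNNReal •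
      Complex.exp (((inner ℝ z t : ℝ) : ℂ) * Complex.I)
      = (gaussConst V : ℂ) * Complex.exp (-(1/2 : ℂ) * (‖z‖ : ℂ) ^ 2
          + Complex.I * ((inner ℝ t z : ℝ) : ℂ)) := by
    intro z
    rw [NNReal.smul_def, Real.coe_toNNReal _ (hpos z), Complex.exp_add, Complex.real_smul,
      real_inner_comm t z]
    push_cast
    ring_nf
  simp_rw [h1]
  rw [integral_const_mul, GaussianFourier.integral_cexp_neg_mul_sq_norm_add (by norm_num)]
  have h2 : (((Real.pi : ℂ) / (1/2)) ^ ((Module.finrank ℝ V : ℂ) / 2))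
      = (((2 * Real.pi) ^ ((Module.finrank ℝ V : ℝ) / 2) : ℝ) : ℂ) := by
    rw [Complex.ofReal_cpow (by positivity)]
    push_cast
    congr 1
    ring
  rw [h2, ← mul_assoc, ← Complex.ofReal_mul]
  unfold gaussConst
  rw [inv_mul_cancel₀ (by positivity)]
  simp only [Complex.ofReal_one, one_mul, Complex.I_sq]
  congr 1
  ring

lemma integral_stdGaussian (g : V → ℝ) :
    ∫ z, g z ∂(stdGaussian V)
      = ∫ z, gaussConst V * Real.exp (-(1/2) * ‖z‖ ^ 2) * g z := by
  rw [stdGaussian_eq_withDensity, integral_withDensity_eq_integral_smul (by fun_prop)]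
  refine integral_congr_ae (Filter.Eventually.of_forall fun z => ?_)
  simp only [NNReal.smul_def, smul_eq_mul]
  rw [Real.coe_toNNReal _ (mul_nonneg gaussConst_nonneg (Real.exp_pos _).le)]

/-- Cameron–Martin formula: translating a standard Gaussian vector by `v` amounts to weighting
its law by `exp (⟨z, v⟩ - ‖v‖² / 2)`. -/
lemma integral_stdGaussian_translate (g : V → ℝ) (v : V) :
    ∫ z, g (z + v) ∂(stdGaussian V)
      = ∫ z, g z * Real.exp (⟪z, v⟫ - ‖v‖ ^ 2 / 2) ∂(stdGaussian V) := by
  rw [integral_stdGaussian, integral_stdGaussian,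
    ← integral_sub_right_eq_self _ v]
  refine integral_congr_ae (Filter.Eventually.of_forall fun z => ?_)
  simp only [sub_add_cancel]
  rw [@norm_sub_sq_real]
  have : Real.exp (-(1/2) * (‖z‖ ^ 2 - 2 * ⟪z, v⟫ + ‖v‖ ^ 2))
      = Real.exp (-(1/2) * ‖z‖ ^ 2) * Real.exp (⟪z, v⟫ - ‖v‖ ^ 2 / 2) := by
    rw [← Real.exp_add]; congr 1; ring
  rw [this]; ring

lemma integrable_exp_norm_stdGaussian (c : ℝ) :
    Integrable (fun z : V => Real.exp (c * ‖z‖)) (stdGaussian V) := by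
  obtain ⟨C, hC, hi0⟩ := IsGaussian.exists_integrable_exp_sq (stdGaussian V)
  refine (hi0.const_mul (Real.exp (c ^ 2 / (4 * C)))).mono' (by fun_prop)
    (Filter.Eventually.of_forall fun z => ?_)
  rw [Real.norm_eq_abs, abs_of_pos (Real.exp_pos _), ← Real.exp_add]
  apply Real.exp_le_exp.mpr
  have h1 : c ^ 2 / (4 * C) + C * ‖z‖ ^ 2 - c * ‖z‖ = (c - 2 * C * ‖z‖) ^ 2 / (4 * C) := by
    field_simp; ring
  have h2 : 0 ≤ (c - 2 * C * ‖z‖) ^ 2 / (4 * C) := by positivity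
  linarith

end Gauss

/-! ### Third-order Taylor expansion of a Gaussian-smoothed Lipschitz function -/

/-- Second-order expansion of `v ↦ exp (⟨z, v⟩ - ‖v‖² / 2)` with cubic remainder; here `w = ‖v‖`,
`r = ‖z‖` and `a = ⟨z, v⟩`. -/
lemma exp_taylor {a w r : ℝ} (hw0 : 0 ≤ w) (hw : w ≤ 1) (hr : 0 ≤ r) (ha : |a| ≤ w * r) :
    |Real.exp (a - w ^ 2 / 2) - 1 - a - (a ^ 2 - w ^ 2) / 2|
      ≤ 100 * w ^ 3 * Real.exp (2 * r) := by
  set x := a - w ^ 2 / 2 with hx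
  have hxa : |x| ≤ w * (r + 1) := by
    rw [hx]
    have := abs_sub a (w ^ 2 / 2)
    rw [abs_of_nonneg (by positivity : (0:ℝ) ≤ w ^ 2 / 2)] at this
    nlinarith
  have hxr : |x| ≤ r + 1 := hxa.trans (by nlinarith)
  have h1 : |Real.exp x - (1 + x + x ^ 2 / 2)| ≤ |x| ^ 3 * Real.exp |x| := by
    have := Complex.norm_exp_sub_sum_le_norm_mul_exp (x : ℂ) 3
    rw [Complex.norm_real, Real.norm_eq_abs] at this
    refine le_trans (le_of_eq ?_) this
    rw [← Real.norm_eq_abs, ← Complex.norm_real]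
    congr 1
    simp [Finset.sum_range_succ]
  have h2 : |x| ^ 3 * Real.exp |x| ≤ w ^ 3 * (16 * Real.exp 1 * Real.exp (2 * r)) := by
    have e1 : |x| ^ 3 ≤ w ^ 3 * (r + 1) ^ 3 := by
      rw [← mul_pow]; exact pow_le_pow_left₀ (abs_nonneg _) hxa 3
    have e2 : Real.exp |x| ≤ Real.exp 1 * Real.exp r := by
      rw [← Real.exp_add]; exact Real.exp_le_exp.mpr (by linarith)
    have e3 : (r + 1) ^ 3 ≤ 16 * Real.exp r := by
      have q := Real.sum_le_exp_of_nonneg hr 4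
      simp [Finset.sum_range_succ, Nat.factorial] at q
      nlinarith [sq_nonneg (r - 1), mul_nonneg hr hr, mul_nonneg hr (mul_nonneg hr hr)]
    calc |x| ^ 3 * Real.exp |x| ≤ (w ^ 3 * (16 * Real.exp r)) * (Real.exp 1 * Real.exp r) := by
          gcongr
          exact e1.trans (by gcongr)
      _ = w ^ 3 * (16 * Real.exp 1 * Real.exp (2 * r)) := by
          rw [show 2 * r = r + r by ring, Real.exp_add]; ring
  have he : Real.exp 1 ≤ 3 := by linarith [Real.exp_one_lt_d9]
  have hr1 : 1 + r ≤ Real.exp (2 * r) := by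
    have := Real.add_one_le_exp (2 * r); linarith
  have h3 : Real.exp x - 1 - a - (a ^ 2 - w ^ 2) / 2
      = (Real.exp x - (1 + x + x ^ 2 / 2)) + (- (a * w ^ 2 / 2) + w ^ 4 / 8) := by
    rw [hx]; ring
  have h4 : |(- (a * w ^ 2 / 2) + w ^ 4 / 8)| ≤ w ^ 3 * (1 + r) := by
    have := abs_le.mp ha
    have hw3 : 0 ≤ w ^ 3 := by positivity
    have hw4 : w ^ 4 ≤ w ^ 3 := pow_le_pow_of_le_one hw0 hw (by norm_num)
    have hw2 : 0 ≤ w ^ 2 := by positivity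
    rw [abs_le]
    constructor <;> nlinarith [mul_nonneg hw3 hr, mul_le_mul_of_nonneg_right this.1 hw2,
      mul_le_mul_of_nonneg_right this.2 hw2, pow_nonneg hw0 4]
  rw [h3]
  refine (abs_add_le _ _).trans ?_
  have hw3 : 0 ≤ w ^ 3 := by positivity
  have hE := Real.exp_pos (2 * r)
  calc _ ≤ w ^ 3 * (16 * Real.exp 1 * Real.exp (2 * r)) + w ^ 3 * (1 + r) :=
        add_le_add (h1.trans h2) h4
    _ ≤ w ^ 3 * (16 * 3 * Real.exp (2 * r)) + w ^ 3 * Real.exp (2 * r) := by gcongr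
    _ ≤ _ := by nlinarith [mul_nonneg hw3 hE.le]

section Smoothing

variable {d : ℕ}

local notation "E" => EuclideanSpace ℝ (Fin d)

variable (d) in
/-- An exponential moment of the standard Gaussian, dominating all moments that occur below. -/
noncomputable def expMoment : ℝ :=
  ∫ z : EuclideanSpace ℝ (Fin d), Real.exp (3 * ‖z‖) ∂(stdGaussian (EuclideanSpace ℝ (Fin d)))

lemma one_le_expMoment : 1 ≤ expMoment d := by
  have h : ∫ _z : E, (1 : ℝ) ∂(stdGaussian E) ≤ expMoment d := by
    refine integral_mono (integrable_const _) (integrable_exp_norm_stdGaussian 3) fun z => ?_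
    exact Real.one_le_exp (by positivity)
  simpa using h

lemma integrable_stdGaussian_of_bound {g : E → ℝ} (hg : Continuous g) {K : ℝ}
    (h : ∀ z, |g z| ≤ K * Real.exp (3 * ‖z‖)) : Integrable g (stdGaussian E) :=
  ((integrable_exp_norm_stdGaussian 3).const_mul K).mono' hg.aestronglyMeasurable
    (Filter.Eventually.of_forall h)

lemma abs_integral_stdGaussian_le {g : E → ℝ} {K : ℝ}
    (h : ∀ z, |g z| ≤ K * Real.exp (3 * ‖z‖)) : |∫ z, g z ∂(stdGaussian E)| ≤ K * expMoment d := by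
  rw [expMoment, ← integral_const_mul, ← Real.norm_eq_abs]
  exact norm_integral_le_of_norm_le ((integrable_exp_norm_stdGaussian 3).const_mul K)
    (Filter.Eventually.of_forall h)

lemma lip_sub_le {h : E → ℝ} (hh : LipschitzWith 1 h) (x y : E) : |h x - h y| ≤ ‖x - y‖ := by
  have := hh.dist_le_mul x y
  rwa [NNReal.coe_one, one_mul, Real.dist_eq, dist_eq_norm] at this

lemma inner_eq_sum_coord (z u : E) : ⟪z, u⟫ = ∑ i, z i * u i := by
  rw [PiLp.inner_apply]
  simp [mul_comm]

lemma abs_coord_le (z : E) (i : Fin d) : |z i| ≤ ‖z‖ := by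
  simpa using PiLp.norm_apply_le z i

lemma pow_bounds {r : ℝ} (hr : 0 ≤ r) :
    r ≤ Real.exp r ∧ r ^ 2 ≤ 2 * Real.exp r ∧ r ^ 3 ≤ 6 * Real.exp r ∧
      Real.exp r ≤ Real.exp (3 * r) ∧ r * Real.exp (2 * r) ≤ Real.exp (3 * r) := by
  have q := Real.sum_le_exp_of_nonneg hr 4
  simp [Finset.sum_range_succ, Nat.factorial] at q
  have h2 := mul_nonneg hr hr
  have h3 := mul_nonneg hr h2
  have h1 : r ≤ Real.exp r := by nlinarith
  refine ⟨h1, by nlinarith, by nlinarith, Real.exp_le_exp.mpr (by linarith), ?_⟩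
  rw [show 3 * r = r + 2 * r by ring, Real.exp_add]
  gcongr

/-- The Gaussian smoothing at scale `s` of a `1`-Lipschitz function agrees with a quadratic
polynomial up to `O(‖u‖³ / s²)`, and the quadratic coefficients are `O(1 / s)`. The derivatives
fall on the Gaussian density by the Cameron–Martin formula, so no smoothness of `h` is needed. -/
lemma smooth_taylor {h : E → ℝ} (hh : LipschitzWith 1 h) {s : ℝ} (hs : 0 < s) (x : E) :
    ∃ (c : ℝ) (a : Fin d → ℝ) (b : Fin d → Fin d → ℝ),
      (∀ i j, |b i j| ≤ 4 * expMoment d / s) ∧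
      ∀ u : E, |∫ z, h (x + u + s • z) ∂(stdGaussian E)
        - (c + ∑ i, a i * u i + ∑ i, ∑ j, b i j * (u i * u j))|
        ≤ 100 * expMoment d * ‖u‖ ^ 3 / s ^ 2 := by
  set D : E → ℝ := fun z => h (x + s • z) - h x with hD
  have hDc : Continuous D := by have := hh.continuous; fun_prop
  have hDb : ∀ z, |D z| ≤ s * ‖z‖ := fun z => by
    refine (lip_sub_le hh _ _).trans (le_of_eq ?_)
    rw [add_sub_cancel_left, norm_smul, Real.norm_eq_abs, abs_of_pos hs]
  have hC1 := one_le_expMoment (d := d)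
  have hcz : ∀ i, Continuous fun z : E => z i := fun i => by fun_prop
  -- envelopes for the three integrands of the expansion
  have hDi : Integrable D (stdGaussian E) := by
    refine integrable_stdGaussian_of_bound hDc (K := s) fun z => (hDb z).trans ?_
    obtain ⟨h1, -, -, h4, -⟩ := pow_bounds (norm_nonneg z)
    gcongr; exact h1.trans h4
  have hA : ∀ i, ∀ z : E, |D z * z i| ≤ (2 * s) * Real.exp (3 * ‖z‖) := fun i z => by
    obtain ⟨-, h2, -, h4, -⟩ := pow_bounds (norm_nonneg z)
    rw [abs_mul]
    calc |D z| * |z i| ≤ (s * ‖z‖) * ‖z‖ :=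
          mul_le_mul (hDb z) (abs_coord_le z i) (abs_nonneg _) (by positivity)
      _ = s * ‖z‖ ^ 2 := by ring
      _ ≤ s * (2 * Real.exp (3 * ‖z‖)) := by gcongr; linarith
      _ = _ := by ring
  have hAi : ∀ i, Integrable (fun z : E => D z * z i) (stdGaussian E) := fun i =>
    integrable_stdGaussian_of_bound (hDc.mul (hcz i)) (hA i)
  have hB : ∀ i j, ∀ z : E, |D z * ((z i * z j - if i = j then 1 else 0) / 2)|
      ≤ (4 * s) * Real.exp (3 * ‖z‖) := fun i j z => by
    obtain ⟨h1, -, h3, h4, -⟩ := pow_bounds (norm_nonneg z)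
    have e : |(z i * z j - if i = j then 1 else 0) / 2| ≤ (‖z‖ ^ 2 + 1) / 2 := by
      rw [abs_div, abs_two]
      gcongr
      refine (abs_sub _ _).trans (add_le_add ?_ (by split_ifs <;> simp))
      rw [abs_mul, sq]
      exact mul_le_mul (abs_coord_le z i) (abs_coord_le z j) (abs_nonneg _) (norm_nonneg _)
    rw [abs_mul]
    calc |D z| * |(z i * z j - if i = j then 1 else 0) / 2|
        ≤ (s * ‖z‖) * ((‖z‖ ^ 2 + 1) / 2) := mul_le_mul (hDb z) e (abs_nonneg _) (by positivity)
      _ = s * ((‖z‖ ^ 3 + ‖z‖) / 2) := by ring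
      _ ≤ s * (4 * Real.exp (3 * ‖z‖)) := by gcongr; linarith [Real.exp_pos ‖z‖]
      _ = _ := by ring
  have hBi : ∀ i j, Integrable (fun z : E => D z * ((z i * z j - if i = j then 1 else 0) / 2))
      (stdGaussian E) := fun i j =>
    integrable_stdGaussian_of_bound (hDc.mul (((hcz i).mul (hcz j)).sub continuous_const
      |>.div_const 2)) (hB i j)
  refine ⟨h x + ∫ z, D z ∂(stdGaussian E), fun i => s⁻¹ * ∫ z, D z * z i ∂(stdGaussian E),
    fun i j => s⁻¹ ^ 2 * ∫ z, D z * ((z i * z j - if i = j then 1 else 0) / 2) ∂(stdGaussian E),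
    fun i j => ?_, fun u => ?_⟩
  · rw [abs_mul, abs_of_pos (by positivity)]
    calc _ ≤ s⁻¹ ^ 2 * ((4 * s) * expMoment d) := by
          gcongr; exact abs_integral_stdGaussian_le (hB i j)
      _ = _ := by field_simp
  set v : E := s⁻¹ • u with hv
  have hvu : s • v = u := by rw [hv, smul_smul, mul_inv_cancel₀ hs.ne', one_smul]
  have hvn : ‖u‖ = s * ‖v‖ := by rw [← hvu, norm_smul, Real.norm_eq_abs, abs_of_pos hs]
  have hu : ∀ i, u i = s * v i := fun i => by rw [← hvu]; simp
  -- the linear and quadratic terms as single integrals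
  have hAs : ∑ i, (s⁻¹ * ∫ z, D z * z i ∂(stdGaussian E)) * u i
      = ∫ z, D z * ⟪z, v⟫ ∂(stdGaussian E) := by
    have : ∀ z : E, D z * ⟪z, v⟫ = ∑ i, (D z * z i) * v i := fun z => by
      rw [inner_eq_sum_coord, Finset.mul_sum]; simp only [mul_assoc]
    simp_rw [this]
    rw [integral_finsetSum _ fun i _ => (hAi i).mul_const _]
    refine Finset.sum_congr rfl fun i _ => ?_
    rw [integral_mul_const, hu]; field_simp
  have hBs : ∑ i, ∑ j, (s⁻¹ ^ 2 * ∫ z, D z * ((z i * z j - if i = j then 1 else 0) / 2)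
        ∂(stdGaussian E)) * (u i * u j)
      = ∫ z, D z * ((⟪z, v⟫ ^ 2 - ‖v‖ ^ 2) / 2) ∂(stdGaussian E) := by
    have : ∀ z : E, D z * ((⟪z, v⟫ ^ 2 - ‖v‖ ^ 2) / 2)
        = ∑ i, ∑ j, (D z * ((z i * z j - if i = j then 1 else 0) / 2)) * (v i * v j) := fun z => by
      have e1 : ⟪z, v⟫ ^ 2 = ∑ i, ∑ j, z i * z j * (v i * v j) := by
        rw [inner_eq_sum_coord, sq, Finset.sum_mul_sum]
        refine Finset.sum_congr rfl fun i _ => Finset.sum_congr rfl fun j _ => by ring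
      have e2 : ‖v‖ ^ 2 = ∑ i, ∑ j, (if i = j then (1:ℝ) else 0) * (v i * v j) := by
        rw [EuclideanSpace.real_norm_sq_eq]
        simp [sq]
      rw [e1, e2, ← Finset.sum_sub_distrib, Finset.sum_div, Finset.mul_sum]
      refine Finset.sum_congr rfl fun i _ => ?_
      rw [← Finset.sum_sub_distrib, Finset.sum_div, Finset.mul_sum]
      refine Finset.sum_congr rfl fun j _ => by ring
    simp_rw [this]
    rw [integral_finsetSum _ fun i _ => integrable_finsetSum _ fun j _ => (hBi i j).mul_const _]
    refine Finset.sum_congr rfl fun i _ => ?_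
    rw [integral_finsetSum _ fun j _ => (hBi i j).mul_const _]
    refine Finset.sum_congr rfl fun j _ => ?_
    rw [integral_mul_const, hu, hu]; field_simp
  rw [hAs, hBs]
  have hAv : ∀ z : E, |D z * ⟪z, v⟫| ≤ (2 * s * ‖v‖) * Real.exp (3 * ‖z‖) := fun z => by
    obtain ⟨-, h2, -, h4, -⟩ := pow_bounds (norm_nonneg z)
    rw [abs_mul]
    calc |D z| * |⟪z, v⟫| ≤ (s * ‖z‖) * (‖z‖ * ‖v‖) :=
          mul_le_mul (hDb z) (abs_real_inner_le_norm z v) (abs_nonneg _) (by positivity)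
      _ = s * ‖v‖ * ‖z‖ ^ 2 := by ring
      _ ≤ s * ‖v‖ * (2 * Real.exp (3 * ‖z‖)) := by gcongr; linarith
      _ = _ := by ring
  have hBv : ∀ z : E, |D z * ((⟪z, v⟫ ^ 2 - ‖v‖ ^ 2) / 2)|
      ≤ (4 * s * ‖v‖ ^ 2) * Real.exp (3 * ‖z‖) := fun z => by
    obtain ⟨h1, -, h3, h4, -⟩ := pow_bounds (norm_nonneg z)
    have e : |(⟪z, v⟫ ^ 2 - ‖v‖ ^ 2) / 2| ≤ ‖v‖ ^ 2 * (‖z‖ ^ 2 + 1) / 2 := by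
      rw [abs_div, abs_two]
      gcongr
      refine (abs_sub _ _).trans ?_
      have : |⟪z, v⟫ ^ 2| ≤ (‖z‖ * ‖v‖) ^ 2 := by
        rw [abs_pow]; exact pow_le_pow_left₀ (abs_nonneg _) (abs_real_inner_le_norm z v) 2
      rw [abs_of_nonneg (sq_nonneg ‖v‖)]
      nlinarith
    rw [abs_mul]
    calc _ ≤ (s * ‖z‖) * (‖v‖ ^ 2 * (‖z‖ ^ 2 + 1) / 2) :=
          mul_le_mul (hDb z) e (abs_nonneg _) (by positivity)
      _ = s * ‖v‖ ^ 2 * ((‖z‖ ^ 3 + ‖z‖) / 2) := by ring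
      _ ≤ s * ‖v‖ ^ 2 * (4 * Real.exp (3 * ‖z‖)) := by gcongr; linarith [Real.exp_pos ‖z‖]
      _ = _ := by ring
  have hshift : ∀ z : E, h (x + u + s • z) = h x + D (z + v) := fun z => by
    simp only [hD]; rw [smul_add, hvu]
    rw [show x + u + s • z = x + (s • z + u) by abel]; ring
  have hDsh : ∀ z : E, |D (z + v) - D z| ≤ ‖u‖ := fun z => by
    simp only [hD]
    rw [sub_sub_sub_cancel_right]
    refine (lip_sub_le hh _ _).trans (le_of_eq ?_)
    rw [smul_add, hvu]; congr 1; abel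
  have hDsi : Integrable (fun z => D (z + v)) (stdGaussian E) := by
    have hc : Continuous fun z => D (z + v) := by fun_prop
    have : Integrable (fun z => D (z + v) - D z) (stdGaussian E) :=
      (integrable_const ‖u‖).mono' (hc.sub hDc).aestronglyMeasurable
        (Filter.Eventually.of_forall hDsh)
    refine (this.add hDi).congr (Filter.Eventually.of_forall fun z => ?_)
    simp
  simp_rw [hshift]
  rw [integral_add (integrable_const _) hDsi]
  simp only [integral_const, probReal_univ, one_smul]
  have htarget : 100 * expMoment d * ‖u‖ ^ 3 / s ^ 2 = 100 * expMoment d * (s * ‖v‖ ^ 3) := by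
    rw [hvn]; field_simp
  rw [htarget]
  have hAvi : Integrable (fun z : E => D z * ⟪z, v⟫) (stdGaussian E) :=
    integrable_stdGaussian_of_bound (by fun_prop) hAv
  have hBvi : Integrable (fun z : E => D z * ((⟪z, v⟫ ^ 2 - ‖v‖ ^ 2) / 2)) (stdGaussian E) :=
    integrable_stdGaussian_of_bound (by fun_prop) hBv
  rcases le_or_gt ‖v‖ 1 with hv1 | hv1
  · rw [integral_stdGaussian_translate]
    have hEi : Integrable (fun z : E => D z * Real.exp (⟪z, v⟫ - ‖v‖ ^ 2 / 2)) (stdGaussian E) := by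
      refine integrable_stdGaussian_of_bound (by fun_prop) (K := s) fun z => ?_
      rw [abs_mul, abs_of_pos (Real.exp_pos _)]
      obtain ⟨-, -, -, -, h5⟩ := pow_bounds (norm_nonneg z)
      have : Real.exp (⟪z, v⟫ - ‖v‖ ^ 2 / 2) ≤ Real.exp (2 * ‖z‖) := by
        apply Real.exp_le_exp.mpr
        have := real_inner_le_norm z v
        nlinarith [norm_nonneg z, norm_nonneg v]
      calc _ ≤ (s * ‖z‖) * Real.exp (2 * ‖z‖) :=
            mul_le_mul (hDb z) this (Real.exp_pos _).le (by positivity)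
        _ = s * (‖z‖ * Real.exp (2 * ‖z‖)) := by ring
        _ ≤ _ := by gcongr
    have heq : h x + ∫ z, D z * Real.exp (⟪z, v⟫ - ‖v‖ ^ 2 / 2) ∂(stdGaussian E)
        - (h x + ∫ z, D z ∂(stdGaussian E) + ∫ z, D z * ⟪z, v⟫ ∂(stdGaussian E)
          + ∫ z, D z * ((⟪z, v⟫ ^ 2 - ‖v‖ ^ 2) / 2) ∂(stdGaussian E))
        = ∫ z, D z * (Real.exp (⟪z, v⟫ - ‖v‖ ^ 2 / 2) - 1 - ⟪z, v⟫ - (⟪z, v⟫ ^ 2 - ‖v‖ ^ 2) / 2)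
          ∂(stdGaussian E) := by
      have : ∀ z : E, D z * (Real.exp (⟪z, v⟫ - ‖v‖ ^ 2 / 2) - 1 - ⟪z, v⟫
            - (⟪z, v⟫ ^ 2 - ‖v‖ ^ 2) / 2)
          = ((D z * Real.exp (⟪z, v⟫ - ‖v‖ ^ 2 / 2) - D z) - D z * ⟪z, v⟫)
            - D z * ((⟪z, v⟫ ^ 2 - ‖v‖ ^ 2) / 2) := fun z => by ring
      simp_rw [this]
      have hi1 : Integrable (fun z : E => D z * Real.exp (⟪z, v⟫ - ‖v‖ ^ 2 / 2) - D z)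
          (stdGaussian E) := hEi.sub hDi
      have hi2 : Integrable (fun z : E => D z * Real.exp (⟪z, v⟫ - ‖v‖ ^ 2 / 2) - D z
          - D z * ⟪z, v⟫) (stdGaussian E) := hi1.sub hAvi
      rw [integral_sub hi2 hBvi, integral_sub hi1 hAvi, integral_sub hEi hDi]
      ring
    rw [heq]
    refine (abs_integral_stdGaussian_le (K := 100 * (s * ‖v‖ ^ 3)) fun z => ?_).trans
      (le_of_eq (by ring))
    rw [abs_mul]
    obtain ⟨-, -, -, -, h5⟩ := pow_bounds (norm_nonneg z)
    calc _ ≤ (s * ‖z‖) * (100 * ‖v‖ ^ 3 * Real.exp (2 * ‖z‖)) := by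
          refine mul_le_mul (hDb z) (exp_taylor (norm_nonneg v) hv1 (norm_nonneg z) ?_)
            (abs_nonneg _) (by positivity)
          rw [mul_comm]; exact abs_real_inner_le_norm z v
      _ = 100 * (s * ‖v‖ ^ 3) * (‖z‖ * Real.exp (2 * ‖z‖)) := by ring
      _ ≤ _ := by gcongr
  · have e1 : |∫ z, D (z + v) ∂(stdGaussian E) - ∫ z, D z ∂(stdGaussian E)|
        ≤ s * ‖v‖ := by
      rw [← integral_sub hDsi hDi, ← hvn, ← Real.norm_eq_abs]
      have := norm_integral_le_of_norm_le_const (μ := stdGaussian E)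
        (f := fun z => D (z + v) - D z) (C := ‖u‖) (Filter.Eventually.of_forall hDsh)
      simpa using this
    have e2 := abs_integral_stdGaussian_le hAv
    have e3 := abs_integral_stdGaussian_le hBv
    have p1 : ‖v‖ ≤ ‖v‖ ^ 3 := by
      nlinarith [mul_pos (by linarith : 0 < ‖v‖) (by linarith : 0 < ‖v‖ - 1)]
    have p2 : ‖v‖ ^ 2 ≤ ‖v‖ ^ 3 := by nlinarith [sq_nonneg ‖v‖]
    have q1 : s * ‖v‖ ≤ 1 * (s * ‖v‖ ^ 3) * expMoment d := by
      have : s * ‖v‖ ≤ s * ‖v‖ ^ 3 := by gcongr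
      nlinarith [mul_nonneg hs.le (norm_nonneg v)]
    have q2 : 2 * s * ‖v‖ * expMoment d ≤ 2 * (s * ‖v‖ ^ 3) * expMoment d := by
      rw [mul_assoc 2 s]; gcongr
    have q3 : 4 * s * ‖v‖ ^ 2 * expMoment d ≤ 4 * (s * ‖v‖ ^ 3) * expMoment d := by
      rw [mul_assoc 4 s]; gcongr
    have q0 : 0 ≤ s * ‖v‖ ^ 3 * expMoment d := by positivity
    rw [abs_le] at e1 e2 e3 ⊢
    constructor <;> linarith [e1.1, e1.2, e2.1, e2.2, e3.1, e3.2]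

end Smoothing

/-! ### Averages of Lipschitz functions and comparison of laws with nearly equal covariance -/

section Matching

variable {d : ℕ}

local notation "E" => EuclideanSpace ℝ (Fin d)

lemma lip_integrable {h : E → ℝ} (hh : LipschitzWith 1 h) {X : Type*} [MeasurableSpace X]
    {μ : Measure X} [IsFiniteMeasure μ] {g : X → E} (hg : AEStronglyMeasurable g μ)
    (hgi : Integrable (fun x => ‖g x‖) μ) : Integrable (fun x => h (g x)) μ := by
  refine ((integrable_const |h 0|).add hgi).mono' (hh.continuous.comp_aestronglyMeasurable hg)
    (Filter.Eventually.of_forall fun x => ?_)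
  have h1 := lip_sub_le hh (g x) 0
  rw [sub_zero] at h1
  have h2 := abs_sub_abs_le_abs_sub (h (g x)) (h 0)
  simp only [Real.norm_eq_abs, Pi.add_apply]
  linarith

lemma lip_integrable_add {h : E → ℝ} (hh : LipschitzWith 1 h) {w : Measure E} [IsFiniteMeasure w]
    (hw : Integrable (fun y => ‖y‖) w) (x : E) : Integrable (fun y => h (x + y)) w := by
  refine lip_integrable hh (by fun_prop) ?_
  refine ((integrable_const ‖x‖).add hw).mono' (by fun_prop)
    (Filter.Eventually.of_forall fun y => ?_)
  simpa using norm_add_le x y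

lemma lip_avg {h : E → ℝ} (hh : LipschitzWith 1 h) {w : Measure E} [IsProbabilityMeasure w]
    (hw : Integrable (fun y => ‖y‖) w) : LipschitzWith 1 (fun x => ∫ y, h (x + y) ∂w) := by
  refine LipschitzWith.of_dist_le_mul fun x x' => ?_
  rw [NNReal.coe_one, one_mul, Real.dist_eq, dist_eq_norm,
    ← integral_sub (lip_integrable_add hh hw x) (lip_integrable_add hh hw x'), ← Real.norm_eq_abs]
  have := norm_integral_le_of_norm_le_const (μ := w) (f := fun y => h (x + y) - h (x' + y))
    (C := ‖x - x'‖) (Filter.Eventually.of_forall fun y => by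
      rw [Real.norm_eq_abs]
      refine (lip_sub_le hh _ _).trans (le_of_eq ?_)
      rw [add_sub_add_right_eq_sub])
  simpa using this

lemma integrable_norm_stdGaussian : Integrable (fun z : E => ‖z‖) (stdGaussian E) :=
  integrable_stdGaussian_of_bound (K := 1) continuous_norm fun z => by
    obtain ⟨h1, -, -, h4, -⟩ := pow_bounds (norm_nonneg z)
    rw [abs_of_nonneg (norm_nonneg z)]; linarith

lemma integrable_norm_of_cube {ν : Measure E} [IsFiniteMeasure ν]
    (h3 : Integrable (fun x => ‖x‖ ^ 3) ν) : Integrable (fun x => ‖x‖) ν := by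
  refine ((integrable_const (1:ℝ)).add h3).mono' (by fun_prop)
    (Filter.Eventually.of_forall fun x => ?_)
  simp only [Real.norm_eq_abs, abs_norm, Pi.add_apply]
  have := norm_nonneg x
  nlinarith [sq_nonneg (‖x‖ - 1), mul_nonneg this (sq_nonneg (‖x‖ - 1))]

lemma integrable_sq_of_cube {ν : Measure E} [IsFiniteMeasure ν]
    (h3 : Integrable (fun x => ‖x‖ ^ 3) ν) : Integrable (fun x => ‖x‖ ^ 2) ν := by
  refine ((integrable_const (1:ℝ)).add h3).mono' (by fun_prop)
    (Filter.Eventually.of_forall fun x => ?_)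
  simp only [Real.norm_eq_abs, Pi.add_apply, abs_pow, abs_norm]
  have := norm_nonneg x
  nlinarith [sq_nonneg (‖x‖ - 1), mul_nonneg this (sq_nonneg (‖x‖ - 1))]

lemma integrable_coord_mul {ν : Measure E} [IsFiniteMeasure ν]
    (h2 : Integrable (fun x => ‖x‖ ^ 2) ν) (i j : Fin d) :
    Integrable (fun x : E => x i * x j) ν := by
  refine h2.mono' (by fun_prop) (Filter.Eventually.of_forall fun x => ?_)
  rw [Real.norm_eq_abs, abs_mul, sq]
  exact mul_le_mul (abs_coord_le x i) (abs_coord_le x j) (abs_nonneg _) (norm_nonneg _)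

/-- Integral of a smoothed Lipschitz function against a centred law, up to its third moment. -/
lemma moment_taylor {ν : Measure E} [IsProbabilityMeasure ν]
    (h3 : Integrable (fun x => ‖x‖ ^ 3) ν) (hmean : ∀ i, ∫ x : E, x i ∂ν = 0)
    {φ : E → ℝ} (hφ : LipschitzWith 1 φ) {c K : ℝ} {a : Fin d → ℝ} {b : Fin d → Fin d → ℝ}
    (hb : ∀ u : E, |φ u - (c + ∑ i, a i * u i + ∑ i, ∑ j, b i j * (u i * u j))| ≤ K * ‖u‖ ^ 3) :
    |∫ u, φ u ∂ν - (c + ∑ i, ∑ j, b i j * ∫ u : E, u i * u j ∂ν)| ≤ K * ∫ u, ‖u‖ ^ 3 ∂ν := by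
  have h1 := integrable_norm_of_cube h3
  have hφi : Integrable φ ν := lip_integrable hφ (by fun_prop) h1
  have hci : ∀ i, Integrable (fun x : E => x i) ν := fun i =>
    h1.mono' (by fun_prop) (Filter.Eventually.of_forall fun x => abs_coord_le x i)
  have hcc := integrable_coord_mul (integrable_sq_of_cube h3)
  have i1 : Integrable (fun u : E => c + ∑ i, a i * u i) ν :=
    (integrable_const c).add (integrable_finsetSum _ fun i _ => (hci i).const_mul _)
  have i2 : Integrable (fun u : E => ∑ i, ∑ j, b i j * (u i * u j)) ν :=
    integrable_finsetSum _ fun i _ => integrable_finsetSum _ fun j _ => (hcc i j).const_mul _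
  have hP : ∫ u : E, (c + ∑ i, a i * u i + ∑ i, ∑ j, b i j * (u i * u j)) ∂ν
      = c + ∑ i, ∑ j, b i j * ∫ u : E, u i * u j ∂ν := by
    rw [integral_add i1 i2, integral_add (integrable_const c)
      (integrable_finsetSum _ fun i _ => (hci i).const_mul _),
      integral_finsetSum _ fun i _ => (hci i).const_mul _,
      integral_finsetSum _ fun i _ => integrable_finsetSum _ fun j _ => (hcc i j).const_mul _]
    simp_rw [integral_const_mul, hmean]
    simp only [integral_const, probReal_univ, one_smul, mul_zero, Finset.sum_const_zero, add_zero]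
    congr 1
    refine Finset.sum_congr rfl fun i _ => ?_
    rw [integral_finsetSum _ fun j _ => (hcc i j).const_mul _]
    simp_rw [integral_const_mul]
  have i3 : Integrable (fun u : E => c + ∑ i, a i * u i + ∑ i, ∑ j, b i j * (u i * u j)) ν :=
    i1.add i2
  rw [← hP, ← integral_sub hφi i3, ← integral_const_mul, ← Real.norm_eq_abs]
  exact norm_integral_le_of_norm_le (h3.const_mul K) (Filter.Eventually.of_forall hb)

/-- Averaging over a law with a Gaussian component splits off a Gaussian smoothing at scale `s`. -/
lemma kernel_eq {h : E → ℝ} (hh : LipschitzWith 1 h) {s : ℝ}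
    {w' w : Measure E} [IsProbabilityMeasure w'] (hw' : Integrable (fun y => ‖y‖) w')
    (hw : w = ((stdGaussian E).prod w').map fun p => s • p.1 + p.2) (x : E) :
    ∫ y, h (x + y) ∂w = ∫ z, (∫ y, h (x + s • z + y) ∂w') ∂(stdGaussian E) := by
  rw [hw, integral_map (by fun_prop) (by have := hh.continuous; fun_prop), integral_prod]
  · simp only [add_assoc]
  · refine lip_integrable hh (by fun_prop) ?_
    have i1 : Integrable (fun p : E × E => ‖x‖ + |s| * ‖p.1‖ + ‖p.2‖)
        ((stdGaussian E).prod w') :=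
      ((integrable_const _).add ((integrable_norm_stdGaussian.comp_fst w').const_mul _)).add
        (hw'.comp_snd _)
    refine i1.mono' (by fun_prop) (Filter.Eventually.of_forall fun p => ?_)
    rw [norm_norm]
    refine (norm_add_le _ _).trans ?_
    have := norm_add_le (s • p.1) p.2
    rw [norm_smul, Real.norm_eq_abs] at this
    linarith

/-- Two centred laws with finite third moments whose covariances differ by at most `δ` entrywise
are close when tested against a `1`-Lipschitz function averaged over a law `w` having a
Gaussian component of variance `s²`. -/
lemma kernel_match {ν₁ ν₂ : Measure E} [IsProbabilityMeasure ν₁] [IsProbabilityMeasure ν₂]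
    (h31 : Integrable (fun x => ‖x‖ ^ 3) ν₁) (h32 : Integrable (fun x => ‖x‖ ^ 3) ν₂)
    (hm1 : ∀ i, ∫ x : E, x i ∂ν₁ = 0) (hm2 : ∀ i, ∫ x : E, x i ∂ν₂ = 0) {δ : ℝ}
    (hcov : ∀ i j, |∫ x : E, x i * x j ∂ν₁ - ∫ x : E, x i * x j ∂ν₂| ≤ δ)
    {h : E → ℝ} (hh : LipschitzWith 1 h) {s : ℝ} (hs : 0 < s)
    {w' w : Measure E} [IsProbabilityMeasure w'] (hw' : Integrable (fun y => ‖y‖) w')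
    (hw : w = ((stdGaussian E).prod w').map fun p => s • p.1 + p.2) (x : E) :
    |∫ u, (∫ y, h (x + u + y) ∂w) ∂ν₁ - ∫ u, (∫ y, h (x + u + y) ∂w) ∂ν₂|
      ≤ 4 * expMoment d * d ^ 2 * δ / s
        + 100 * expMoment d / s ^ 2 * (∫ u, ‖u‖ ^ 3 ∂ν₁ + ∫ u, ‖u‖ ^ 3 ∂ν₂) := by
  have hG := lip_avg hh hw'
  obtain ⟨c, a, b, hb, hT⟩ := smooth_taylor hG hs x
  have hφL : LipschitzWith 1 (fun u : E => ∫ z, (∫ y, h (x + u + s • z + y) ∂w')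
      ∂(stdGaussian E)) := by
    have hsG : Integrable (fun z : E => ‖z‖) ((stdGaussian E).map (fun z => s • z)) := by
      rw [integrable_map_measure (by fun_prop) (by fun_prop)]
      refine (integrable_norm_stdGaussian.const_mul |s|).congr
        (Filter.Eventually.of_forall fun z => ?_)
      simp [norm_smul]
    have hP : IsProbabilityMeasure ((stdGaussian E).map (fun z => s • z)) :=
      Measure.isProbabilityMeasure_map (by fun_prop)
    have h1 := lip_avg hG hsG
    have h2 : ∀ x', ∫ z, (∫ y, h (x' + z + y) ∂w') ∂((stdGaussian E).map (fun z => s • z))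
        = ∫ z, (∫ y, h (x' + s • z + y) ∂w') ∂(stdGaussian E) := fun x' => by
      rw [integral_map (by fun_prop)]
      exact (hG.continuous.comp (continuous_const.add continuous_id)).aestronglyMeasurable
    simp_rw [h2] at h1
    refine LipschitzWith.of_dist_le_mul fun u u' => ?_
    have := h1.dist_le_mul (x + u) (x + u')
    rwa [dist_add_left] at this
  simp_rw [kernel_eq hh hw' hw]
  have hT' : ∀ u : E, |∫ z, (∫ y, h (x + u + s • z + y) ∂w') ∂(stdGaussian E)
      - (c + ∑ i, a i * u i + ∑ i, ∑ j, b i j * (u i * u j))|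
      ≤ 100 * expMoment d / s ^ 2 * ‖u‖ ^ 3 := fun u => (hT u).trans (le_of_eq (by ring))
  have t1 := moment_taylor h31 hm1 hφL hT'
  have t2 := moment_taylor h32 hm2 hφL hT'
  have t3 : |∑ i, ∑ j, b i j * (∫ u : E, u i * u j ∂ν₁) - ∑ i, ∑ j, b i j * ∫ u : E, u i * u j ∂ν₂|
      ≤ 4 * expMoment d * d ^ 2 * δ / s := by
    simp_rw [← Finset.sum_sub_distrib, ← mul_sub]
    calc _ ≤ ∑ i : Fin d, ∑ j : Fin d, (4 * expMoment d / s) * δ := by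
          refine (Finset.abs_sum_le_sum_abs _ _).trans (Finset.sum_le_sum fun i _ => ?_)
          refine (Finset.abs_sum_le_sum_abs _ _).trans (Finset.sum_le_sum fun j _ => ?_)
          rw [abs_mul]
          exact mul_le_mul (hb i j) (hcov i j) (abs_nonneg _) ((abs_nonneg _).trans (hb i j))
      _ = _ := by simp; ring
  rw [mul_add]
  rw [abs_le] at *
  constructor <;> linarith [t1.1, t1.2, t2.1, t2.2, t3.1, t3.2]

end Matching

/-! ### Centred Gaussian laws with prescribed covariance -/

section Gaussians

variable {d : ℕ}

local notation "E" => EuclideanSpace ℝ (Fin d)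

/-- `μ` is the centred Gaussian law whose covariance has quadratic form `Q`, expressed through
its characteristic function. -/
def IsG (μ : Measure (EuclideanSpace ℝ (Fin d))) (Q : EuclideanSpace ℝ (Fin d) → ℝ) : Prop :=
  ∀ t, charFun μ t = Complex.exp (-((Q t : ℝ) : ℂ) / 2)

lemma IsG.unique {μ μ' : Measure E} [IsProbabilityMeasure μ] [IsProbabilityMeasure μ'] {Q : E → ℝ}
    (h : IsG μ Q) (h' : IsG μ' Q) : μ = μ' :=
  Measure.ext_of_charFun (funext fun t => by rw [h t, h' t])

lemma isG_stdGaussian : IsG (stdGaussian E) (fun t => ‖t‖ ^ 2) := fun t => by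
  rw [charFun_stdGaussian]; push_cast; rfl

lemma isG_dirac : IsG (Measure.dirac (0 : E)) (fun _ => 0) := fun t => by
  simp [charFun_apply]

lemma IsG.comb {μ w : Measure E} [IsProbabilityMeasure μ] [IsProbabilityMeasure w] {Q R : E → ℝ}
    (h : IsG μ Q) (h' : IsG w R) {T : E →L[ℝ] E} (hT : ∀ x y, ⟪T x, y⟫ = ⟪x, T y⟫) :
    IsG ((μ.prod w).map fun p => T p.1 + p.2) (fun t => Q (T t) + R t) := fun t => by
  rw [charFun_apply, integral_map (by fun_prop) (by fun_prop)]
  have : ∀ p : E × E, Complex.exp ((⟪T p.1 + p.2, t⟫ : ℝ) * Complex.I)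
      = Complex.exp ((⟪p.1, T t⟫ : ℝ) * Complex.I) * Complex.exp ((⟪p.2, t⟫ : ℝ) * Complex.I) :=
    fun p => by
      rw [← Complex.exp_add, inner_add_left, hT]; congr 1; push_cast; ring
  simp_rw [this]
  rw [integral_prod_mul (μ := μ) (ν := w) (fun x => Complex.exp ((⟪x, T t⟫ : ℝ) * Complex.I))
    (fun x => Complex.exp ((⟪x, t⟫ : ℝ) * Complex.I)), ← charFun_apply, ← charFun_apply, h, h',
    ← Complex.exp_add]
  congr 1; push_cast; ring

lemma integral_inner_mul_stdGaussian (x y : E) :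
    ∫ z, ⟪x, z⟫ * ⟪y, z⟫ ∂(stdGaussian E) = ⟪x, y⟫ := by
  have h := covarianceBilin_apply (μ := stdGaussian E) IsGaussian.memLp_two_id x y
  rw [covarianceBilin_stdGaussian, innerSL_apply_apply] at h
  simpa using h.symm

open scoped MatrixOrder in
lemma exists_sqrt {V : E →L[ℝ] E} (hV : V.IsPositive) :
    ∃ R : E →L[ℝ] E, (∀ x y, ⟪R x, y⟫ = ⟪x, R y⟫) ∧ ∀ x, R (R x) = V x := by
  obtain ⟨S, rfl⟩ := (toEuclideanCLM (n := Fin d) (𝕜 := ℝ)).surjective V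
  have hS : S.PosSemidef := by
    rw [← Matrix.isPositive_toEuclideanLin_iff, ← coe_toEuclideanCLM_eq_toEuclideanLin]
    exact hV.toLinearMap
  refine ⟨toEuclideanCLM (n := Fin d) (𝕜 := ℝ) (CFC.sqrt S), fun x y => ?_, fun x => ?_⟩
  · have h : IsSelfAdjoint (toEuclideanCLM (n := Fin d) (𝕜 := ℝ) (CFC.sqrt S)) :=
      (CFC.sqrt_nonneg S).isSelfAdjoint.map _
    exact h.isSymmetric x y
  · rw [← ContinuousLinearMap.comp_apply, ← ContinuousLinearMap.mul_def, ← map_mul,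
      CFC.sqrt_mul_sqrt_self _ hS.nonneg]
    rfl

/-- A positive operator `V` is the covariance of a centred Gaussian law, namely the image of the
standard Gaussian under the square root of `V`. -/
lemma exists_isG {V : E →L[ℝ] E} (hV : V.IsPositive) {κ : ℝ} (hκ : 0 ≤ κ)
    (hb : ∀ t, ⟪t, V t⟫ ≤ κ ^ 2 * ‖t‖ ^ 2) :
    ∃ w : Measure E, IsProbabilityMeasure w ∧ IsG w (fun t => ⟪t, V t⟫) ∧
      Integrable (fun x => ‖x‖ ^ 3) w ∧ Integrable (fun x => ‖x‖) w ∧ (∀ i, ∫ x : E, x i ∂w = 0) ∧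
      (∀ p q : E, ∫ x : E, ⟪p, x⟫ * ⟪q, x⟫ ∂w = ⟪p, V q⟫) ∧
      ∫ x, ‖x‖ ^ 3 ∂w ≤ κ ^ 3 * (6 * expMoment d) ∧ ∫ x, ‖x‖ ∂w ≤ κ * expMoment d := by
  obtain ⟨R, hRs, hRR⟩ := exists_sqrt hV
  have hRn : ∀ x, ‖R x‖ ^ 2 = ⟪x, V x⟫ := fun x => by
    rw [← real_inner_self_eq_norm_sq, hRs, hRR]
  have hRb : ∀ x, ‖R x‖ ≤ κ * ‖x‖ := fun x => by
    refine abs_le_of_sq_le_sq' ?_ (by positivity) |>.2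
    rw [hRn, mul_pow]; exact hb x
  have hcR := R.continuous
  have b3 : ∀ z, |‖R z‖ ^ 3| ≤ (κ ^ 3 * 6) * Real.exp (3 * ‖z‖) := fun z => by
    obtain ⟨-, -, h3, h4, -⟩ := pow_bounds (norm_nonneg z)
    rw [abs_of_nonneg (by positivity)]
    calc ‖R z‖ ^ 3 ≤ (κ * ‖z‖) ^ 3 := by gcongr; exact hRb z
      _ = κ ^ 3 * ‖z‖ ^ 3 := by ring
      _ ≤ κ ^ 3 * (6 * Real.exp (3 * ‖z‖)) := by gcongr; linarith
      _ = _ := by ring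
  have b1 : ∀ z, |‖R z‖| ≤ κ * Real.exp (3 * ‖z‖) := fun z => by
    obtain ⟨h1, -, -, h4, -⟩ := pow_bounds (norm_nonneg z)
    rw [abs_norm]
    exact (hRb z).trans (by gcongr; linarith)
  have i3 : Integrable (fun z => ‖R z‖ ^ 3) (stdGaussian E) :=
    integrable_stdGaussian_of_bound (by fun_prop) b3
  have i1 : Integrable (fun z => ‖R z‖) (stdGaussian E) :=
    integrable_stdGaussian_of_bound (by fun_prop) b1
  have hm : AEMeasurable R (stdGaussian E) := by fun_prop
  refine ⟨(stdGaussian E).map R, Measure.isProbabilityMeasure_map hm, fun t => ?_, ?_, ?_,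
    fun i => ?_, fun p q => ?_, ?_, ?_⟩
  · rw [charFun_apply, integral_map hm (by fun_prop)]
    simp_rw [hRs]
    rw [← charFun_apply, charFun_stdGaussian, ← hRn]
    push_cast; rfl
  · rw [integrable_map_measure (by fun_prop) hm]; exact i3
  · rw [integrable_map_measure (by fun_prop) hm]; exact i1
  · rw [integral_map hm (by fun_prop)]
    have := integral_strongDual_stdGaussian ((EuclideanSpace.proj i : E →L[ℝ] ℝ).comp R)
    simpa using this
  · rw [integral_map hm (by fun_prop)]
    simp_rw [← hRs]
    rw [integral_inner_mul_stdGaussian, hRs, hRR]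
  · rw [integral_map hm (by fun_prop)]
    exact (le_abs_self _).trans ((abs_integral_stdGaussian_le b3).trans (le_of_eq (by ring)))
  · rw [integral_map hm (by fun_prop)]
    exact (le_abs_self _).trans (abs_integral_stdGaussian_le b1)

end Gaussians

/-! ### Comparing a stationary law with a Gaussian law along the linearised chain -/

section Telescoping

variable {d : ℕ}

local notation "E" => EuclideanSpace ℝ (Fin d)

lemma avg_map_add {h : E → ℝ} (hh : LipschitzWith 1 h) {X : Type*} [MeasurableSpace X]
    {μ : Measure X} [IsProbabilityMeasure μ] {w : Measure E} [IsProbabilityMeasure w]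
    {g : X → E} (hg : Measurable g) (hgi : Integrable (fun y => ‖g y‖) μ)
    (hw : Integrable (fun y => ‖y‖) w) (x : E) :
    ∫ y, h (x + y) ∂((μ.prod w).map fun p => g p.1 + p.2)
      = ∫ n, (∫ u, h (x + g n + u) ∂w) ∂μ := by
  rw [integral_map (by fun_prop) (by have := hh.continuous; fun_prop), integral_prod]
  · simp only [add_assoc]
  · refine lip_integrable hh (by fun_prop) ?_
    have i1 : Integrable (fun p : X × E => ‖x‖ + ‖g p.1‖ + ‖p.2‖) (μ.prod w) :=
      ((integrable_const _).add (hgi.comp_fst w)).add (hw.comp_snd _)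
    refine i1.mono' (by fun_prop) (Filter.Eventually.of_forall fun p => ?_)
    rw [norm_norm]
    have h1 := norm_add_le x (g p.1 + p.2)
    have h2 := norm_add_le (g p.1) p.2
    linarith

lemma integrable_norm_map {μ : Measure E} {T : E →L[ℝ] E}
    (hμ : Integrable (fun y => ‖y‖) μ) : Integrable (fun y => ‖T y‖) μ :=
  (hμ.const_mul ‖T‖).mono' (by fun_prop) (Filter.Eventually.of_forall fun y => by
    rw [norm_norm]; exact T.le_opNorm y)

lemma abs_integral_sub_le {X : Type*} [MeasurableSpace X] {μ : Measure X} {f g b : X → ℝ}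
    (hf : Integrable f μ) (hg : Integrable g μ) (hb : Integrable b μ)
    (h : ∀ x, |f x - g x| ≤ b x) : |∫ x, f x ∂μ - ∫ x, g x ∂μ| ≤ ∫ x, b x ∂μ := by
  rw [← integral_sub hf hg, ← Real.norm_eq_abs]
  exact norm_integral_le_of_norm_le hb (Filter.Eventually.of_forall h)

/-- One step of the telescoping: in a stationary average the nonlinear step `T` with noise `η`
is replaced by the linear step `A` with noise `N`, after propagation by `Ak` and averaging
against `w`. -/
lemma tele_step {h : E → ℝ} (hh : LipschitzWith 1 h) {π η N w : Measure E}
    [IsProbabilityMeasure π] [IsProbabilityMeasure η] [IsProbabilityMeasure N]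
    [IsProbabilityMeasure w]
    (hπ2 : Integrable (fun y => ‖y‖ ^ 2) π) (hπ1 : Integrable (fun y => ‖y‖) π)
    (hη : Integrable (fun y => ‖y‖) η)
    (hN : Integrable (fun y => ‖y‖) N) (hw : Integrable (fun y => ‖y‖) w)
    {T : E → E} (hTm : Measurable T) {A Ak : E →L[ℝ] E} {K r m err : ℝ} (hK : 0 ≤ K) (hr : 0 ≤ r)
    (hT : ∀ y, ‖T y - A y‖ ≤ K * ‖y‖ ^ 2) (hAk : ∀ y, ‖Ak y‖ ≤ r * ‖y‖)
    (hm : ∫ y, ‖y‖ ^ 2 ∂π ≤ m)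
    (hinv : (π.prod η).map (fun p => T p.1 + p.2) = π)
    (herr : ∀ x, |∫ u, (∫ y, h (x + Ak u + y) ∂w) ∂η
      - ∫ u, (∫ y, h (x + Ak u + y) ∂w) ∂N| ≤ err) :
    |∫ y, (∫ u, h (Ak y + u) ∂w) ∂π
      - ∫ y, (∫ u, h (Ak (A y) + u) ∂((N.prod w).map fun p => Ak p.1 + p.2)) ∂π|
      ≤ r * K * m + err := by
  set φ : E → ℝ := fun x => ∫ u, h (x + u) ∂w with hφd
  have hφ : LipschitzWith 1 φ := lip_avg hh hw
  have hAη : Integrable (fun y => ‖y‖) (η.map Ak) := by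
    rw [integrable_map_measure (by fun_prop) (by fun_prop)]; exact integrable_norm_map hη
  have hAN : Integrable (fun y => ‖y‖) (N.map Ak) := by
    rw [integrable_map_measure (by fun_prop) (by fun_prop)]; exact integrable_norm_map hN
  have hP1 : IsProbabilityMeasure (η.map Ak) := Measure.isProbabilityMeasure_map (by fun_prop)
  have hP2 : IsProbabilityMeasure (N.map Ak) := Measure.isProbabilityMeasure_map (by fun_prop)
  have e1 : ∀ x, ∫ y, φ (x + y) ∂(η.map Ak) = ∫ u, φ (x + Ak u) ∂η := fun x =>
    integral_map (by fun_prop) (by have := hφ.continuous; fun_prop)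
  have e2 : ∀ x, ∫ y, φ (x + y) ∂(N.map Ak) = ∫ u, φ (x + Ak u) ∂N := fun x =>
    integral_map (by fun_prop) (by have := hφ.continuous; fun_prop)
  have L1 := lip_avg hφ hAη
  have L2 := lip_avg hφ hAN
  simp_rw [e1] at L1
  simp_rw [e2] at L2
  set ψ : E → ℝ := fun x => ∫ u, φ (x + Ak u) ∂η with hψ
  set χ : E → ℝ := fun x => ∫ u, φ (x + Ak u) ∂N with hχ
  have hTi : Integrable (fun y => ‖T y‖) π := by
    refine ((integrable_norm_map (T := A) hπ1).add (hπ2.const_mul K)).mono' (by fun_prop)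
      (Filter.Eventually.of_forall fun y => ?_)
    rw [norm_norm]
    have := norm_add_le (T y - A y) (A y)
    rw [sub_add_cancel] at this
    have h2 := hT y
    simp only [Pi.add_apply]; linarith
  have hATi : Integrable (fun y => ‖Ak (T y)‖) π :=
    (hTi.const_mul ‖Ak‖).mono' (by fun_prop) (Filter.Eventually.of_forall fun y => by
      rw [norm_norm]; exact Ak.le_opNorm _)
  have hAAi : Integrable (fun y => ‖Ak (A y)‖) π :=
    integrable_norm_map (T := Ak.comp A) hπ1
  have key1 : ∫ y, φ (Ak y) ∂π = ∫ y, ψ (Ak (T y)) ∂π := by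
    conv_lhs => rw [← hinv]
    rw [integral_map (by fun_prop) (by have := hφ.continuous; fun_prop), integral_prod]
    · simp only [map_add, hψ]
    · refine lip_integrable hφ (by fun_prop) ?_
      have i1 : Integrable (fun p : E × E => ‖Ak (T p.1)‖ + ‖Ak p.2‖) (π.prod η) :=
        (hATi.comp_fst η).add ((integrable_norm_map hη).comp_snd π)
      refine i1.mono' (by fun_prop) (Filter.Eventually.of_forall fun p => ?_)
      rw [norm_norm, map_add]; exact norm_add_le _ _
  have key2 : ∀ x, ∫ u, h (x + u) ∂((N.prod w).map fun p => Ak p.1 + p.2) = χ x := fun x =>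
    avg_map_add hh (by fun_prop) (integrable_norm_map hN) hw x
  simp_rw [key2]
  have iψT := lip_integrable L1 (g := fun y => Ak (T y)) (by fun_prop) hATi
  have iψA := lip_integrable L1 (g := fun y => Ak (A y)) (by fun_prop) hAAi
  have iχA := lip_integrable L2 (g := fun y => Ak (A y)) (by fun_prop) hAAi
  have b1 : |∫ y, ψ (Ak (T y)) ∂π - ∫ y, ψ (Ak (A y)) ∂π| ≤ r * K * m := by
    refine (abs_integral_sub_le iψT iψA (hπ2.const_mul (r * K)) fun y => ?_).trans ?_
    · refine (lip_sub_le L1 _ _).trans ?_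
      rw [← map_sub, mul_assoc]
      exact (hAk _).trans (by gcongr; exact hT y)
    · rw [integral_const_mul]; gcongr
  have b2 : |∫ y, ψ (Ak (A y)) ∂π - ∫ y, χ (Ak (A y)) ∂π| ≤ err := by
    refine (abs_integral_sub_le iψA iχA (integrable_const err) fun y => herr _).trans ?_
    simp
  rw [key1]
  exact (abs_sub_le _ (∫ y, ψ (Ak (A y)) ∂π) _).trans (add_le_add b1 b2)

end Telescoping

/-! ### Summing the replacement errors -/

section Sum

variable {d : ℕ}

local notation "E" => EuclideanSpace ℝ (Fin d)

lemma clm_pow_succ (A : E →L[ℝ] E) (k : ℕ) (x : E) : (A ^ (k + 1)) x = (A ^ k) (A x) := by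
  rw [pow_succ]; rfl

lemma clm_pow_succ' (A : E →L[ℝ] E) (k : ℕ) (x : E) : (A ^ (k + 1)) x = A ((A ^ k) x) := by
  rw [pow_succ']; rfl

lemma pow_symm {A : E →L[ℝ] E} (hA : ∀ x y, ⟪A x, y⟫ = ⟪x, A y⟫) (k : ℕ) :
    ∀ x y, ⟪(A ^ k) x, y⟫ = ⟪x, (A ^ k) y⟫ := by
  induction k with
  | zero => intro x y; simp
  | succ k ih =>
    intro x y
    rw [clm_pow_succ, ih, hA, ← clm_pow_succ']

lemma pow_norm_le {A : E →L[ℝ] E} {ρ : ℝ} (hρ : 0 ≤ ρ) (hA : ∀ x, ‖A x‖ ≤ ρ * ‖x‖) (k : ℕ) :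
    ∀ x, ‖(A ^ k) x‖ ≤ ρ ^ k * ‖x‖ := by
  induction k with
  | zero => intro x; simp
  | succ k ih =>
    intro x
    rw [clm_pow_succ, pow_succ, mul_assoc]
    exact (ih _).trans (by gcongr; exact hA x)

/-- The covariance operator of the `k`-step noise of the linear chain started at the origin:
what is missing from `A ^ k B A ^ k` to reach the stationary covariance `B`. -/
noncomputable def stepCov (A B : EuclideanSpace ℝ (Fin d) →L[ℝ] EuclideanSpace ℝ (Fin d)) (k : ℕ) :
    EuclideanSpace ℝ (Fin d) →L[ℝ] EuclideanSpace ℝ (Fin d) :=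
  B - (A ^ k).comp (B.comp (A ^ k))

lemma inner_stepCov {A B : E →L[ℝ] E} (hA : ∀ x y, ⟪A x, y⟫ = ⟪x, A y⟫) (k : ℕ) (p q : E) :
    ⟪p, stepCov A B k q⟫ = ⟪p, B q⟫ - ⟪(A ^ k) p, B ((A ^ k) q)⟫ := by
  rw [stepCov, _root_.sub_apply, inner_sub_right, ContinuousLinearMap.comp_apply,
    ContinuousLinearMap.comp_apply, pow_symm hA]

lemma stepCov_gap {A B : E →L[ℝ] E} {c : ℝ}
    (hgap : ∀ t, c * (‖t‖ ^ 2 - ‖A t‖ ^ 2) ≤ ⟪t, B t⟫ - ⟪A t, B (A t)⟫) (k : ℕ) :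
    ∀ t, c * (‖t‖ ^ 2 - ‖(A ^ k) t‖ ^ 2) ≤ ⟪t, B t⟫ - ⟪(A ^ k) t, B ((A ^ k) t)⟫ := by
  induction k with
  | zero => intro t; simp
  | succ k ih =>
    intro t
    rw [clm_pow_succ]
    have h1 := ih (A t)
    have h2 := hgap t
    linarith

/-- The `k`-step noise is nondegenerate with a variance proportional to `1 - ρ ^ k`; this is the
smoothing scale available for the `k`-th replacement. -/
lemma stepCov_ge {A B : E →L[ℝ] E} (hA : ∀ x y, ⟪A x, y⟫ = ⟪x, A y⟫) {c ρ : ℝ} (hc : 0 ≤ c)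
    (hρ : 0 ≤ ρ) (hρ1 : ρ ≤ 1) (hAn : ∀ x, ‖A x‖ ≤ ρ * ‖x‖)
    (hgap : ∀ t, c * (‖t‖ ^ 2 - ‖A t‖ ^ 2) ≤ ⟪t, B t⟫ - ⟪A t, B (A t)⟫) (k : ℕ) (t : E) :
    c * (1 - ρ ^ k) * ‖t‖ ^ 2 ≤ ⟪t, stepCov A B k t⟫ := by
  rw [inner_stepCov hA]
  refine le_trans ?_ (stepCov_gap hgap k t)
  have h1 : ‖(A ^ k) t‖ ^ 2 ≤ ρ ^ k * ‖t‖ ^ 2 := by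
    have h2 := pow_le_pow_left₀ (norm_nonneg _) (pow_norm_le hρ hAn k t) 2
    have h3 : (ρ ^ k) ^ 2 ≤ ρ ^ k := by
      have := pow_le_one₀ (n := k) hρ hρ1
      have h0 := pow_nonneg hρ k
      nlinarith
    rw [mul_pow] at h2
    exact h2.trans (by gcongr)
  have : ‖t‖ ^ 2 - ρ ^ k * ‖t‖ ^ 2 ≤ ‖t‖ ^ 2 - ‖(A ^ k) t‖ ^ 2 := by linarith
  calc _ = c * (‖t‖ ^ 2 - ρ ^ k * ‖t‖ ^ 2) := by ring
    _ ≤ _ := by gcongr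

lemma stepCov_symm {A B : E →L[ℝ] E} (hA : ∀ x y, ⟪A x, y⟫ = ⟪x, A y⟫) (hB : B.IsPositive)
    (k : ℕ) (x y : E) : ⟪stepCov A B k x, y⟫ = ⟪x, stepCov A B k y⟫ := by
  have hBs : ∀ x y, ⟪B x, y⟫ = ⟪x, B y⟫ := fun x y => hB.isSymmetric x y
  rw [inner_stepCov hA, ← hBs, ← hBs, real_inner_comm, inner_stepCov hA, real_inner_comm (B x),
    real_inner_comm (B ((A ^ k) x))]

lemma isPositive_of {V : E →L[ℝ] E} (h1 : ∀ x y, ⟪V x, y⟫ = ⟪x, V y⟫)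
    (h2 : ∀ x, 0 ≤ ⟪x, V x⟫) : V.IsPositive := by
  rw [ContinuousLinearMap.isPositive_iff]
  exact ⟨fun x y => h1 x y, fun x => by rw [h1]; exact h2 x⟩

/-- The error of the `k`-th replacement, `k ≥ 1`. -/
noncomputable def stepErr (d : ℕ) (ρ c D τ : ℝ) (k : ℕ) : ℝ :=
  4 * expMoment d * d ^ 2 * (D * ρ ^ (2 * k)) / Real.sqrt (c * (1 - ρ ^ k))
    + 100 * expMoment d / (c * (1 - ρ ^ k)) * (ρ ^ (3 * k) * τ)

lemma integral_map_cube_le {η : Measure E} {T : E →L[ℝ] E} {r τ : ℝ} (hr : 0 ≤ r)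
    (hT : ∀ x, ‖T x‖ ≤ r * ‖x‖) (h3 : Integrable (fun x => ‖x‖ ^ 3) η)
    (hτ : ∫ x, ‖x‖ ^ 3 ∂η ≤ τ) :
    Integrable (fun x => ‖x‖ ^ 3) (η.map T) ∧ ∫ x, ‖x‖ ^ 3 ∂(η.map T) ≤ r ^ 3 * τ := by
  have hb : ∀ x, ‖T x‖ ^ 3 ≤ r ^ 3 * ‖x‖ ^ 3 := fun x => by
    rw [← mul_pow]; exact pow_le_pow_left₀ (norm_nonneg _) (hT x) 3
  have hi : Integrable (fun x => ‖T x‖ ^ 3) η :=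
    (h3.const_mul (r ^ 3)).mono' (by fun_prop) (Filter.Eventually.of_forall fun x => by
      rw [Real.norm_eq_abs, abs_of_nonneg (by positivity)]; exact hb x)
  constructor
  · rw [integrable_map_measure (by fun_prop) (by fun_prop)]; exact hi
  · rw [integral_map (by fun_prop) (by fun_prop)]
    refine (integral_mono hi (h3.const_mul _) hb).trans ?_
    rw [integral_const_mul]; gcongr

/-- The covariances of the true noise `η` and the Gaussian noise `N`, both propagated `j ≥ 1` steps,
are compared with the help of the isotropic Gaussian component of the `j`-step noise `w`. -/
lemma step_err_bound {h : E → ℝ} (hh : LipschitzWith 1 h) {η N w : Measure E}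
    [IsProbabilityMeasure η] [IsProbabilityMeasure N] [IsProbabilityMeasure w]
    {A B : E →L[ℝ] E} {ρ c β D τ τ' : ℝ} (hD : 0 ≤ D)
    (hρ : 0 < ρ) (hρ1 : ρ < 1) (hc : 0 < c) (hβ : 0 ≤ β)
    (hA : ∀ x y, ⟪A x, y⟫ = ⟪x, A y⟫) (hAn : ∀ x, ‖A x‖ ≤ ρ * ‖x‖) (hB : B.IsPositive)
    (hgap : ∀ t, c * (‖t‖ ^ 2 - ‖A t‖ ^ 2) ≤ ⟪t, B t⟫ - ⟪A t, B (A t)⟫)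
    (hη3 : Integrable (fun y => ‖y‖ ^ 3) η) (hηm : ∀ p, ∫ x : E, ⟪p, x⟫ ∂η = 0)
    (hτ : ∫ x, ‖x‖ ^ 3 ∂η ≤ τ)
    (hN3 : Integrable (fun y => ‖y‖ ^ 3) N) (hNm : ∀ i, ∫ x : E, x i ∂N = 0)
    (hN3b : ∫ x, ‖x‖ ^ 3 ∂N ≤ τ')
    (hηD : ∀ p q, |∫ x, ⟪p, x⟫ * ⟪q, x⟫ ∂η - ∫ x, ⟪p, x⟫ * ⟪q, x⟫ ∂N| ≤ D * ‖p‖ * ‖q‖)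
    {j : ℕ} (hj : j ≠ 0) (hub : ∀ t, ⟪t, stepCov A B j t⟫ ≤ β ^ 2 * ‖t‖ ^ 2)
    (hwG : IsG w fun t => ⟪t, stepCov A B j t⟫) (hw1 : Integrable (fun y => ‖y‖) w) (x : E) :
    |∫ u, (∫ y, h (x + (A ^ j) u + y) ∂w) ∂η - ∫ u, (∫ y, h (x + (A ^ j) u + y) ∂w) ∂N|
      ≤ stepErr d ρ c D (τ + τ') j := by
  have hN1 := integrable_norm_of_cube hN3
  have hAk := pow_norm_le hρ.le hAn
  have hρj : ρ ^ j < 1 := pow_lt_one₀ hρ.le hρ1 (by omega)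
  have hs2 : 0 < c * (1 - ρ ^ j) := mul_pos hc (by linarith)
  set s := Real.sqrt (c * (1 - ρ ^ j)) with hs
  have hs0 : 0 < s := Real.sqrt_pos.mpr hs2
  have hss : s ^ 2 = c * (1 - ρ ^ j) := Real.sq_sqrt hs2.le
  -- split off an isotropic component of variance `s²` from `w`
  have hV' : (stepCov A B j - s ^ 2 • ContinuousLinearMap.id ℝ E).IsPositive := by
    refine isPositive_of (fun p q => ?_) fun p => ?_
    · simp [inner_sub_left, inner_sub_right, stepCov_symm hA hB, real_inner_smul_left,
        real_inner_smul_right]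
    · have := stepCov_ge hA hc.le hρ.le hρ1.le hAn hgap j p
      simp only [_root_.sub_apply, _root_.smul_apply,
        ContinuousLinearMap.id_apply, inner_sub_right, real_inner_smul_right,
        real_inner_self_eq_norm_sq]
      rw [hss]; linarith
  obtain ⟨w', hw'P, hw'G, -, hw'1, -⟩ := exists_isG hV' hβ fun t => by
    simp only [_root_.sub_apply, _root_.smul_apply,
      ContinuousLinearMap.id_apply, inner_sub_right, real_inner_smul_right,
      real_inner_self_eq_norm_sq]
    have := hub t
    have : 0 ≤ s ^ 2 * ‖t‖ ^ 2 := by positivity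
    linarith
  have hw : w = ((stdGaussian E).prod w').map fun p => s • p.1 + p.2 := by
    have : IsProbabilityMeasure (((stdGaussian E).prod w').map fun p => s • p.1 + p.2) :=
      Measure.isProbabilityMeasure_map (by fun_prop)
    refine hwG.unique fun t => ?_
    have := (isG_stdGaussian.comb hw'G (T := s • ContinuousLinearMap.id ℝ E) fun x y => by
      simp [real_inner_smul_left, real_inner_smul_right]) t
    simp only [_root_.smul_apply, ContinuousLinearMap.id_apply] at this
    rw [this]
    simp only [_root_.sub_apply, _root_.smul_apply,
      ContinuousLinearMap.id_apply, inner_sub_right, real_inner_smul_right,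
      real_inner_self_eq_norm_sq, norm_smul, Real.norm_eq_abs, mul_pow, sq_abs]
    congr 3; ring_nf
  obtain ⟨c1, c2⟩ := integral_map_cube_le (pow_nonneg hρ.le j) (hAk j) hη3 hτ
  obtain ⟨c3, c4⟩ := integral_map_cube_le (pow_nonneg hρ.le j) (hAk j) hN3 hN3b
  have hP1 : IsProbabilityMeasure (η.map (A ^ j)) := Measure.isProbabilityMeasure_map (by fun_prop)
  have hP2 : IsProbabilityMeasure (N.map (A ^ j)) := Measure.isProbabilityMeasure_map (by fun_prop)
  have hco : ∀ (x : E) (i : Fin d), x i = ⟪EuclideanSpace.single i (1:ℝ), x⟫ := fun x i => by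
    simp [EuclideanSpace.inner_single_left]
  have hNm' : ∀ p : E, ∫ x : E, ⟪p, x⟫ ∂N = 0 := fun p => by
    have hci : ∀ i, Integrable (fun x : E => x i) N := fun i =>
      hN1.mono' (by fun_prop) (Filter.Eventually.of_forall fun x => abs_coord_le x i)
    simp_rw [inner_eq_sum_coord]
    rw [integral_finsetSum _ fun i _ => (hci i).const_mul _]
    simp_rw [integral_const_mul, hNm]; simp
  have hmean : ∀ (μ : Measure E), (∀ p, ∫ x : E, ⟪p, x⟫ ∂μ = 0) →
      ∀ i, ∫ x : E, x i ∂(μ.map (A ^ j)) = 0 := fun μ hμ i => by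
    rw [integral_map (by fun_prop) (by fun_prop)]
    simp_rw [hco, ← pow_symm hA]
    exact hμ _
  have hsingle : ∀ i, ‖(A ^ j) (EuclideanSpace.single i (1:ℝ))‖ ≤ ρ ^ j := fun i => by
    have := hAk j (EuclideanSpace.single i (1:ℝ))
    simpa using this
  have hcov : ∀ i j', |∫ x : E, x i * x j' ∂(η.map (A ^ j)) - ∫ x : E, x i * x j' ∂(N.map (A ^ j))|
      ≤ D * ρ ^ (2 * j) := fun i j' => by
    rw [integral_map (by fun_prop) (by fun_prop), integral_map (by fun_prop) (by fun_prop)]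
    simp_rw [hco, ← pow_symm hA]
    refine (hηD _ _).trans ?_
    rw [two_mul, pow_add, mul_assoc]
    gcongr
    · exact hsingle i
    · exact hsingle j'
  have key := kernel_match c1 c3 (hmean η hηm) (hmean N hNm') hcov hh hs0 hw'1 hw x
  have hL := (lip_avg hh hw1).continuous
  have tr : ∀ μ : Measure E, ∫ u, (∫ y, h (x + u + y) ∂(w)) ∂(μ.map (A ^ j))
      = ∫ u, (∫ y, h (x + (A ^ j) u + y) ∂(w)) ∂μ := fun μ =>
    integral_map (by fun_prop)
      (hL.comp (continuous_const.add continuous_id)).aestronglyMeasurable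
  rw [tr, tr] at key
  refine key.trans ?_
  rw [stepErr, ← hs, hss]
  have hC := one_le_expMoment (d := d)
  gcongr
  rw [mul_add, mul_comm 3 j, pow_mul]
  exact add_le_add c2 c4

lemma abs_integral_lip_comp_sub_le {φ : E → ℝ} (hφ : LipschitzWith 1 φ) {T : E →L[ℝ] E} {r : ℝ}
    (hT : ∀ x, ‖T x‖ ≤ r * ‖x‖) {μ : Measure E} [IsProbabilityMeasure μ]
    (hμ : Integrable (fun y => ‖y‖) μ) : |∫ y, φ (T y) ∂μ - φ 0| ≤ r * ∫ u, ‖u‖ ∂μ := by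
  have hi : Integrable (fun y => φ (T y)) μ :=
    lip_integrable hφ (g := T) (by fun_prop) (integrable_norm_map hμ)
  have := abs_integral_sub_le hi (integrable_const (φ 0)) (hμ.const_mul r)
    fun u => (lip_sub_le hφ _ _).trans (by rw [sub_zero]; exact hT u)
  rw [integral_const_mul] at this
  simpa using this

/-- Lindeberg replacement of `n + 1` steps, most recent first. The four groups of terms are the
linearisation errors, the most recent step (where no Gaussian smoothing is available yet), the
smoothed replacements, and what is left of the dependence on the state `n + 1` steps back. -/
lemma tele_sum {h : E → ℝ} (hh : LipschitzWith 1 h) {π η γ : Measure E}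
    [IsProbabilityMeasure π] [IsProbabilityMeasure η] [IsProbabilityMeasure γ]
    {T : E → E} (hTm : Measurable T) {A B : E →L[ℝ] E} {K ρ m c β κ D τ τ₁ : ℝ} (hK : 0 ≤ K) (hD : 0 ≤ D)
    (hρ : 0 < ρ) (hρ1 : ρ < 1) (hc : 0 < c) (hβ : 0 ≤ β) (hκ : 0 ≤ κ)
    (hA : ∀ x y, ⟪A x, y⟫ = ⟪x, A y⟫) (hAn : ∀ x, ‖A x‖ ≤ ρ * ‖x‖)
    (hB : B.IsPositive) (hBb : ∀ t, ⟪t, B t⟫ ≤ β ^ 2 * ‖t‖ ^ 2)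
    (hgap : ∀ t, c * (‖t‖ ^ 2 - ‖A t‖ ^ 2) ≤ ⟪t, B t⟫ - ⟪A t, B (A t)⟫)
    (hκb : ∀ t, ⟪t, B t⟫ - ⟪A t, B (A t)⟫ ≤ κ ^ 2 * ‖t‖ ^ 2)
    (hπ2 : Integrable (fun y => ‖y‖ ^ 2) π) (hm : ∫ y, ‖y‖ ^ 2 ∂π ≤ m)
    (hη3 : Integrable (fun y => ‖y‖ ^ 3) η) (hηm : ∀ p, ∫ x : E, ⟪p, x⟫ ∂η = 0)
    (hηD : ∀ p q, |∫ x, ⟪p, x⟫ * ⟪q, x⟫ ∂η - (⟪p, B q⟫ - ⟪A p, B (A q)⟫)| ≤ D * ‖p‖ * ‖q‖)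
    (hτ : ∫ x, ‖x‖ ^ 3 ∂η ≤ τ) (hτ₁ : ∫ x, ‖x‖ ∂η ≤ τ₁)
    (hT : ∀ y, ‖T y - A y‖ ≤ K * ‖y‖ ^ 2)
    (hinv : (π.prod η).map (fun p => T p.1 + p.2) = π)
    (hγ : IsG γ fun t => ⟪t, B t⟫) (n : ℕ) :
    |∫ y, h y ∂π - ∫ y, h y ∂γ| ≤ (∑ k ∈ Finset.range (n + 1), ρ ^ k * K * m)
      + (τ₁ + κ * expMoment d)
      + (∑ k ∈ Finset.range n, stepErr d ρ c D (τ + κ ^ 3 * (6 * expMoment d)) (k + 1))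
      + ρ ^ (n + 1) * ((1 + m) + β * expMoment d) := by
  have hpos : ∀ k t, 0 ≤ ⟪t, stepCov A B k t⟫ := fun k t =>
    le_trans (by have := pow_le_one₀ (n := k) hρ.le hρ1.le
                 have : 0 ≤ 1 - ρ ^ k := by linarith
                 positivity)
      (stepCov_ge hA hc.le hρ.le hρ1.le hAn hgap k t)
  have hBpos : ∀ t, 0 ≤ ⟪t, B t⟫ := fun t => hB.inner_nonneg_right t
  have hub : ∀ k t, ⟪t, stepCov A B k t⟫ ≤ β ^ 2 * ‖t‖ ^ 2 := fun k t => by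
    rw [inner_stepCov hA]; linarith [hBpos ((A ^ k) t), hBb t]
  -- the `k`-step noise laws and the one-step noise law
  choose w hwP hwG _ hw1 _ _ _ _ using fun k =>
    exists_isG (isPositive_of (stepCov_symm hA hB k) (hpos k)) hβ (hub k)
  obtain ⟨N, hNP, hNG, hN3, hN1, hNm, hNc, hN3b, hN1b⟩ :=
    exists_isG (isPositive_of (stepCov_symm hA hB 1) (hpos 1)) hκ fun t => by
      rw [inner_stepCov hA]; simpa using hκb t
  obtain ⟨γ', hγ'P, hγ'G, -, hγ1, -, -, -, hγ1b⟩ := exists_isG hB hβ hBb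
  obtain rfl : γ = γ' := hγ.unique hγ'G
  have hπ1 : Integrable (fun y => ‖y‖) π :=
    ((integrable_const (1:ℝ)).add hπ2).mono' (by fun_prop) (Filter.Eventually.of_forall fun y => by
      simp only [norm_norm, Pi.add_apply]; nlinarith [sq_nonneg (‖y‖ - 1), norm_nonneg y])
  have hπ1b : ∫ y, ‖y‖ ∂π ≤ 1 + m := by
    refine (integral_mono hπ1 ((integrable_const (1:ℝ)).add hπ2) fun y => ?_).trans ?_
    · simp only [Pi.add_apply]; nlinarith [sq_nonneg (‖y‖ - 1), norm_nonneg y]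
    · simp only [Pi.add_apply]
      rw [integral_add (integrable_const _) hπ2]; simpa using hm
  have hη1 := integrable_norm_of_cube hη3
  have hAk := pow_norm_le hρ.le hAn
  have hwstep : ∀ k, w (k + 1) = (N.prod (w k)).map fun p => (A ^ k) p.1 + p.2 := fun k => by
    have : IsProbabilityMeasure ((N.prod (w k)).map fun p => (A ^ k) p.1 + p.2) :=
      Measure.isProbabilityMeasure_map (by fun_prop)
    refine (hwG (k + 1)).unique fun t => ?_
    rw [(hNG.comb (hwG k) (pow_symm hA k)) t]
    simp only [inner_stepCov hA, pow_one]
    rw [← clm_pow_succ']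
    congr 3; ring_nf
  set φ : ℕ → E → ℝ := fun k y => ∫ u, h ((A ^ k) y + u) ∂(w k) with hφ
  have hstep : ∀ k err, (∀ x, |∫ u, (∫ y, h (x + (A ^ k) u + y) ∂(w k)) ∂η
      - ∫ u, (∫ y, h (x + (A ^ k) u + y) ∂(w k)) ∂N| ≤ err) →
      |∫ y, φ k y ∂π - ∫ y, φ (k + 1) y ∂π| ≤ ρ ^ k * K * m + err := fun k err herr => by
    have := tele_step hh hπ2 hπ1 hη1 hN1 (hw1 k) hTm hK (pow_nonneg hρ.le k) hT (hAk k) hm hinv herr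
    rw [← hwstep] at this
    simp only [hφ]
    simp_rw [clm_pow_succ]
    exact this
  have herr0 : ∀ x, |∫ u, (∫ y, h (x + (A ^ 0) u + y) ∂(w 0)) ∂η
      - ∫ u, (∫ y, h (x + (A ^ 0) u + y) ∂(w 0)) ∂N| ≤ τ₁ + κ * expMoment d := fun x => by
    have hL := lip_avg hh (hw1 0)
    set ψ : E → ℝ := fun x => ∫ y, h (x + y) ∂(w 0)
    have b : ∀ (μ : Measure E) [IsProbabilityMeasure μ], Integrable (fun y => ‖y‖) μ →
        |∫ u, ψ (x + u) ∂μ - ψ x| ≤ ∫ u, ‖u‖ ∂μ := fun μ _ hμ => by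
      have := abs_integral_sub_le (lip_integrable_add hL hμ x) (integrable_const (ψ x)) hμ
        fun u => (lip_sub_le hL _ _).trans (le_of_eq (by rw [add_sub_cancel_left]))
      simpa using this
    have b1 := b η hη1
    have b2 := b N hN1
    simp only [pow_zero, one_apply_eq_self]
    change |∫ u, ψ (x + u) ∂η - ∫ u, ψ (x + u) ∂N| ≤ _
    rw [abs_le] at *
    constructor <;> linarith [b1.1, b1.2, b2.1, b2.2]
  have herrk : ∀ k, ∀ x, |∫ u, (∫ y, h (x + (A ^ (k + 1)) u + y) ∂(w (k + 1))) ∂η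
      - ∫ u, (∫ y, h (x + (A ^ (k + 1)) u + y) ∂(w (k + 1))) ∂N|
      ≤ stepErr d ρ c D (τ + κ ^ 3 * (6 * expMoment d)) (k + 1) := fun k x =>
    step_err_bound hh hD hρ hρ1 hc hβ hA hAn hB hgap hη3 hηm hτ hN3 hNm hN3b
      (fun p q => by
        rw [hNc, inner_stepCov hA, pow_one]; exact hηD p q)
      (Nat.succ_ne_zero k) (hub (k + 1)) (hwG (k + 1)) (hw1 (k + 1)) x
  have hsum : ∀ n, |∫ y, φ 0 y ∂π - ∫ y, φ (n + 1) y ∂π|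
      ≤ (∑ k ∈ Finset.range (n + 1), ρ ^ k * K * m) + (τ₁ + κ * expMoment d)
      + (∑ k ∈ Finset.range n, stepErr d ρ c D (τ + κ ^ 3 * (6 * expMoment d)) (k + 1)) := by
    intro n
    induction n with
    | zero => simpa using hstep 0 _ herr0
    | succ n ih =>
      rw [Finset.sum_range_succ (fun k => ρ ^ k * K * m) (n + 1),
        Finset.sum_range_succ (fun k => stepErr d ρ c D _ (k + 1)) n]
      have := hstep (n + 1) _ (herrk n)
      have h3 := abs_sub_le (∫ y, φ 0 y ∂π) (∫ y, φ (n + 1) y ∂π) (∫ y, φ (n + 1 + 1) y ∂π)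
      linarith
  have hφ0 : ∀ y, φ 0 y = h y := fun y => by
    have : w 0 = Measure.dirac 0 := (hwG 0).unique fun t => by
      rw [isG_dirac t]; simp [inner_stepCov hA]
    simp [hφ, this]
  have hγφ : ∀ k, ∫ y, φ k y ∂γ = ∫ y, h y ∂γ := fun k => by
    have : IsProbabilityMeasure ((γ.prod (w k)).map fun p => (A ^ k) p.1 + p.2) :=
      Measure.isProbabilityMeasure_map (by fun_prop)
    have hγk : γ = (γ.prod (w k)).map fun p => (A ^ k) p.1 + p.2 := by
      refine hγ.unique fun t => ?_
      rw [(hγ.comb (hwG k) (pow_symm hA k)) t]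
      simp only [inner_stepCov hA]
      congr 3; ring_nf
    have := avg_map_add hh (g := A ^ k) (by fun_prop) (integrable_norm_map hγ1) (hw1 k) 0
    rw [← hγk] at this
    simpa [hφ] using this.symm
  have hlast : |∫ y, φ (n + 1) y ∂π - ∫ y, φ (n + 1) y ∂γ|
      ≤ ρ ^ (n + 1) * ((1 + m) + β * expMoment d) := by
    have hL := lip_avg hh (hw1 (n + 1))
    have b1 := abs_integral_lip_comp_sub_le hL (hAk (n + 1)) hπ1
    have b2 := abs_integral_lip_comp_sub_le hL (hAk (n + 1)) hγ1
    have p1 : ρ ^ (n + 1) * ∫ u, ‖u‖ ∂π ≤ ρ ^ (n + 1) * (1 + m) := by gcongr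
    have p2 : ρ ^ (n + 1) * ∫ u, ‖u‖ ∂γ ≤ ρ ^ (n + 1) * (β * expMoment d) := by gcongr
    rw [mul_add]
    simp only [hφ]
    rw [abs_le] at b1 b2 ⊢
    constructor <;> linarith [b1.1, b1.2, b2.1, b2.2]
  have := hsum n
  simp_rw [hφ0] at this
  rw [hγφ] at hlast
  have h3 := abs_sub_le (∫ y, h y ∂π) (∫ y, φ (n + 1) y ∂π) (∫ y, h y ∂γ)
  linarith

end Sum

/-! ### The rate `√α log (1 / α)` -/

section Rate

/-- A lower bound on `1 - ρ ^ k` that turns the smoothed replacement errors, of size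
`ρ ^ k / (1 - ρ ^ k)`, into the terms `1 / (k (1 - ρ))` of a harmonic sum. -/
lemma geom_gap {ρ : ℝ} (hρ : 0 < ρ) (hρ1 : ρ < 1) (k : ℕ) : ρ ^ k * (k * (1 - ρ)) ≤ 1 - ρ ^ k := by
  induction k with
  | zero => simp
  | succ k ih =>
    have h1 := mul_le_mul_of_nonneg_left ih hρ.le
    have h2 : ρ ^ (k + 1) * (1 - ρ) ≤ 1 * (1 - ρ) :=
      mul_le_mul_of_nonneg_right (pow_le_one₀ hρ.le hρ1.le) (by linarith)
    rw [pow_succ] at *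
    push_cast
    nlinarith

lemma stepErr_le {d : ℕ} {α σ c D₀ τ₀ : ℝ} (hα : 0 < α) (hα1 : α ≤ 1) (hσ : 0 < σ)
    (hασ : α * σ < 1) (hc : 0 < c) (hD : 0 ≤ D₀) (hτ : 0 ≤ τ₀) (k : ℕ) :
    stepErr d (1 - α * σ) c (D₀ * α ^ 2) (τ₀ * (α * √α)) (k + 1)
      ≤ (4 * expMoment d * d ^ 2 * D₀ * √c + 100 * expMoment d * τ₀) / (c * σ) * √α
        * ((k + 1 : ℕ) : ℝ)⁻¹ := by
  set j := k + 1 with hj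
  set ρ := 1 - α * σ with hρd
  have hρ : 0 < ρ := by linarith
  have hρ1 : ρ < 1 := by have := mul_pos hα hσ; linarith
  have hρj : ρ ^ j < 1 := pow_lt_one₀ hρ.le hρ1 (by omega)
  have hρj0 : 0 < ρ ^ j := pow_pos hρ j
  have hj0 : (0:ℝ) < j := by positivity
  have hC : 0 ≤ expMoment d := by linarith [one_le_expMoment (d := d)]
  set s2 := c * (1 - ρ ^ j) with hs2
  have hs : 0 < s2 := mul_pos hc (by linarith)
  have hsqα : 0 < √α := Real.sqrt_pos.mpr hα
  have hα2 : α ^ 2 ≤ α * √α := by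
    rw [sq]; gcongr
    exact Real.le_sqrt_of_sq_le (by nlinarith)
  have h2 : ρ ^ (2 * j) ≤ ρ ^ j := pow_le_pow_of_le_one hρ.le hρ1.le (by omega)
  have h3 : ρ ^ (3 * j) ≤ ρ ^ j := pow_le_pow_of_le_one hρ.le hρ1.le (by omega)
  have h4 : ρ ^ j / s2 ≤ (c * (j * (α * σ)))⁻¹ := by
    have := geom_gap hρ hρ1 j
    rw [div_le_iff₀ hs, hs2, ← div_eq_inv_mul, le_div_iff₀ (by positivity)]
    have e : 1 - ρ = α * σ := by rw [hρd]; ring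
    rw [e] at this
    nlinarith
  have h5 : (√s2)⁻¹ ≤ √c / s2 := by
    rw [inv_eq_one_div, div_le_div_iff₀ (Real.sqrt_pos.mpr hs) hs, one_mul]
    have : √s2 ≤ √c := Real.sqrt_le_sqrt (by rw [hs2]; nlinarith)
    calc s2 = √s2 * √s2 := (Real.mul_self_sqrt hs.le).symm
      _ ≤ √c * √s2 := by gcongr
  have e1 : 4 * expMoment d * d ^ 2 * (D₀ * α ^ 2 * ρ ^ (2 * j)) / √s2
      ≤ (4 * expMoment d * d ^ 2 * D₀ * √c) * (α * √α) * (ρ ^ j / s2) := by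
    rw [div_eq_mul_inv]
    calc _ ≤ 4 * expMoment d * d ^ 2 * (D₀ * (α * √α) * ρ ^ j) * (√c / s2) := by gcongr
      _ = _ := by ring
  have e2 : 100 * expMoment d / s2 * (ρ ^ (3 * j) * (τ₀ * (α * √α)))
      ≤ (100 * expMoment d * τ₀) * (α * √α) * (ρ ^ j / s2) := by
    calc _ ≤ 100 * expMoment d / s2 * (ρ ^ j * (τ₀ * (α * √α))) := by gcongr
      _ = _ := by ring
  have e3 : 0 ≤ (4 * expMoment d * d ^ 2 * D₀ * √c + 100 * expMoment d * τ₀) * (α * √α) := by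
    positivity
  have e4 := mul_le_mul_of_nonneg_left h4 e3
  rw [stepErr]
  refine (add_le_add e1 e2).trans (le_trans (le_of_eq ?_) (e4.trans (le_of_eq ?_)))
  · ring
  · field_simp

/-- With `⌈1 / α²⌉` replacements the telescoping bound is of order `√α log (1 / α)`: the
replacement errors add up to `√α` times a harmonic sum, and the remainder is exponentially
small. -/
lemma rate {d : ℕ} {α σ c D₀ τ₀ K₀ m t₁ R : ℝ} (hα : 0 < α) (hα1 : 1 ≤ Real.log (1 / α))
    (hσ : 0 < σ) (hασ : α * σ < 1) (hc : 0 < c) (hD : 0 ≤ D₀) (hτ : 0 ≤ τ₀) (hK : 0 ≤ K₀)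
    (hm : 0 ≤ m) (ht : 0 ≤ t₁) (hR : 0 ≤ R) :
    ∃ n : ℕ, (∑ k ∈ Finset.range (n + 1), (1 - α * σ) ^ k * (K₀ * (α * √α)) * m) + t₁ * √α
      + (∑ k ∈ Finset.range n, stepErr d (1 - α * σ) c (D₀ * α ^ 2) (τ₀ * (α * √α)) (k + 1))
      + (1 - α * σ) ^ (n + 1) * R
      ≤ (K₀ * m / σ + t₁ + 4 * ((4 * expMoment d * d ^ 2 * D₀ * √c + 100 * expMoment d * τ₀)
        / (c * σ)) + R / σ) * (√α * Real.log (1 / α)) := by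
  have hαle : α ≤ 1 := by
    by_contra h
    push Not at h
    have : Real.log (1 / α) ≤ 0 := Real.log_nonpos (by positivity)
      (by rw [div_le_one hα]; exact h.le)
    linarith
  set ℓ := Real.log (1 / α) with hℓ
  set ρ := 1 - α * σ with hρd
  have hρ : 0 < ρ := by linarith
  have hρ1 : ρ < 1 := by have := mul_pos hα hσ; linarith
  have hsqα : 0 < √α := Real.sqrt_pos.mpr hα
  have hC : 0 ≤ expMoment d := by linarith [one_le_expMoment (d := d)]
  set n := ⌈1 / α ^ 2⌉₊ with hn
  have hα2 : 1 ≤ 1 / α ^ 2 := by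
    rw [le_div_iff₀ (by positivity), one_mul]; nlinarith
  have hn1 : 1 / α ^ 2 ≤ n := Nat.le_ceil _
  have hn2 : (n : ℝ) ≤ 2 * (1 / α ^ 2) := by
    have := (Nat.ceil_lt_add_one (by positivity : 0 ≤ 1 / α ^ 2)).le
    linarith
  refine ⟨n, ?_⟩
  have b1 : ∑ k ∈ Finset.range (n + 1), ρ ^ k * (K₀ * (α * √α)) * m ≤ K₀ * m / σ * √α := by
    simp_rw [mul_assoc]
    rw [← Finset.sum_mul]
    have hg : ∑ k ∈ Finset.range (n + 1), ρ ^ k ≤ 1 / (α * σ) := by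
      rw [geom_sum_eq hρ1.ne, ← neg_div_neg_eq]
      have : -(ρ - 1) = α * σ := by rw [hρd]; ring
      rw [this]
      gcongr
      have := pow_pos hρ (n + 1)
      linarith
    refine (mul_le_mul_of_nonneg_right hg (by positivity)).trans (le_of_eq ?_)
    field_simp
  have b2 : ∑ k ∈ Finset.range n, stepErr d ρ c (D₀ * α ^ 2) (τ₀ * (α * √α)) (k + 1)
      ≤ ((4 * expMoment d * d ^ 2 * D₀ * √c + 100 * expMoment d * τ₀) / (c * σ)) * √α * (4 * ℓ) := by
    refine (Finset.sum_le_sum fun k _ => stepErr_le hα hαle hσ hασ hc hD hτ k).trans ?_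
    rw [← Finset.mul_sum]
    refine mul_le_mul_of_nonneg_left ?_ (by positivity)
    have h1 := harmonic_le_one_add_log n
    simp only [harmonic, Rat.cast_sum, Rat.cast_inv, Rat.cast_natCast] at h1
    refine h1.trans ?_
    have h2 : Real.log n ≤ Real.log (2 * (1 / α ^ 2)) :=
      Real.log_le_log (by linarith) hn2
    have h3 : Real.log (2 * (1 / α ^ 2)) = Real.log 2 + 2 * ℓ := by
      rw [Real.log_mul (by norm_num) (by positivity), hℓ, one_div, one_div, Real.log_inv,
        Real.log_inv, Real.log_pow]
      push_cast; ring
    have := Real.log_two_lt_d9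
    linarith
  have b3 : ρ ^ (n + 1) * R ≤ R / σ * √α := by
    have h1 : ρ ^ (n + 1) ≤ α / σ := by
      have e1 : ρ ^ (n + 1) ≤ ρ ^ n := pow_le_pow_of_le_one hρ.le hρ1.le (by omega)
      have e2 : ρ ^ n ≤ Real.exp (-(α * σ)) ^ n := by
        gcongr
        have := Real.add_one_le_exp (-(α * σ))
        rw [hρd]; linarith
      have e3 : Real.exp (-(α * σ)) ^ n ≤ Real.exp (-(σ / α)) := by
        rw [← Real.exp_nat_mul]
        apply Real.exp_le_exp.mpr
        have : σ / α ≤ n * (α * σ) := by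
          calc σ / α = (1 / α ^ 2) * (α * σ) := by field_simp
            _ ≤ _ := by gcongr
        linarith
      have e4 : Real.exp (-(σ / α)) ≤ α / σ := by
        rw [Real.exp_neg, inv_le_comm₀ (Real.exp_pos _) (by positivity), inv_div]
        linarith [Real.add_one_le_exp (σ / α)]
      linarith
    have h2 : α ≤ √α := Real.le_sqrt_of_sq_le (by nlinarith)
    calc _ ≤ α / σ * R := by gcongr
      _ = R / σ * α := by ring
      _ ≤ _ := by gcongr
  have hl : √α ≤ √α * ℓ := le_mul_of_one_le_right hsqα.le hα1
  have c1 : K₀ * m / σ * √α ≤ K₀ * m / σ * (√α * ℓ) := by gcongr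
  have c2 : t₁ * √α ≤ t₁ * (√α * ℓ) := by gcongr
  have c3 : R / σ * √α ≤ R / σ * (√α * ℓ) := by gcongr
  calc _ ≤ K₀ * m / σ * (√α * ℓ) + t₁ * (√α * ℓ)
        + ((4 * expMoment d * d ^ 2 * D₀ * √c + 100 * expMoment d * τ₀) / (c * σ)) * √α * (4 * ℓ)
        + R / σ * (√α * ℓ) := by linarith
    _ = _ := by ring

end Rate

/-! ### Wasserstein bound for perturbed linear chains -/

section Bound

variable {d : ℕ}

local notation "E" => EuclideanSpace ℝ (Fin d)

/-- A symmetric operator `A` with `0 ≤ A ≤ ρ` has norm at most `ρ`. -/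
lemma norm_le_of_quad {A : E →L[ℝ] E} {ρ : ℝ} (hρ : 0 < ρ) (hA : ∀ x y, ⟪A x, y⟫ = ⟪x, A y⟫)
    (h0 : ∀ x, 0 ≤ ⟪A x, x⟫) (h1 : ∀ x, ⟪A x, x⟫ ≤ ρ * ‖x‖ ^ 2) (x : E) : ‖A x‖ ≤ ρ * ‖x‖ := by
  -- polarization at `x ± y` with `y = ρ⁻¹ A x`
  have key : ∀ y, 4 * ⟪A x, y⟫ ≤ 2 * ρ * (‖x‖ ^ 2 + ‖y‖ ^ 2) := by
    intro y
    have e1 := h1 (x + y)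
    have e2 := h0 (x - y)
    have e3 : ‖x + y‖ ^ 2 + ‖x - y‖ ^ 2 = 2 * (‖x‖ ^ 2 + ‖y‖ ^ 2) := by
      have := parallelogram_law_with_norm ℝ x y
      nlinarith
    have e4 : ⟪A (x + y), x + y⟫ - ⟪A (x - y), x - y⟫ = 4 * ⟪A x, y⟫ := by
      simp only [map_add, map_sub, inner_add_left, inner_add_right, inner_sub_left,
        inner_sub_right]
      rw [hA y x, real_inner_comm (A x) y]
      ring
    have e5 := h1 (x - y)
    have e6 := h0 (x + y)
    nlinarith [sq_nonneg ‖x - y‖]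
  have h := key (ρ⁻¹ • A x)
  rw [inner_smul_right, real_inner_self_eq_norm_sq, norm_smul, Real.norm_eq_abs,
    abs_of_pos (inv_pos.mpr hρ), mul_pow] at h
  have h2 : 4 * (ρ⁻¹ * ‖A x‖ ^ 2) = 4 * ρ * (ρ⁻¹ * ‖A x‖) ^ 2 := by field_simp
  have h3 : ‖A x‖ = ρ * (ρ⁻¹ * ‖A x‖) := by field_simp
  have h4 : (ρ⁻¹ * ‖A x‖) ^ 2 ≤ ‖x‖ ^ 2 := by
    have : 2 * ρ * (ρ⁻¹ * ‖A x‖) ^ 2 ≤ 2 * ρ * ‖x‖ ^ 2 := by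
      rw [mul_pow]; rw [h2, mul_pow] at h; linarith
    exact le_of_mul_le_mul_left this (by positivity)
  rw [h3]
  gcongr
  exact abs_le_of_sq_le_sq' h4 (norm_nonneg _) |>.2

set_option maxHeartbeats 800000 in
/-- The Wasserstein bound for a small-noise perturbation of the linear chain
`y ↦ y - α Hy + √α ξ`, with a constant uniform in the stepsize. -/
theorem wass_const {Hc B S : E →L[ℝ] E} {σ L lam β bn κ₁ K₀ m : ℝ} (hσ : 0 < σ) (hL : 0 < L)
    (hlam : 0 < lam) (hβ : 0 ≤ β) (hbn : 0 ≤ bn) (hκ₁ : 0 ≤ κ₁) (hK₀ : 0 ≤ K₀) (hm : 0 ≤ m)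
    (hHs : ∀ x y, ⟪Hc x, y⟫ = ⟪x, Hc y⟫) (hHσ : ∀ t, σ * ‖t‖ ^ 2 ≤ ⟪Hc t, t⟫)
    (hHL : ∀ t, ‖Hc t‖ ≤ L * ‖t‖) (hB : B.IsPositive)
    (hBβ : ∀ t, ⟪t, B t⟫ ≤ β ^ 2 * ‖t‖ ^ 2) (hBn : ∀ t, ‖B t‖ ≤ bn * ‖t‖)
    (hLy : ∀ p q, ⟪p, S q⟫ = ⟪Hc p, B q⟫ + ⟪p, B (Hc q)⟫)
    (hSl : ∀ t, lam * ‖t‖ ^ 2 ≤ ⟪t, S t⟫) (hSk : ∀ t, ⟪t, S t⟫ ≤ κ₁ ^ 2 * ‖t‖ ^ 2)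
    {ν γ : Measure E} [IsProbabilityMeasure ν] [IsProbabilityMeasure γ]
    (hν3 : Integrable (fun x => ‖x‖ ^ 3) ν) (hνm : ∀ p : E, ∫ x, ⟪p, x⟫ ∂ν = 0)
    (hνc : ∀ p q : E, ∫ x, ⟪p, x⟫ * ⟪q, x⟫ ∂ν = ⟪p, S q⟫) (hγ : IsG γ fun t => ⟪t, B t⟫) :
    ∃ U, 0 ≤ U ∧ ∀ α, 0 < α → 1 ≤ Real.log (1 / α) → α * L ≤ 1 → α * σ < 1 →
      2 * α * β ^ 2 * L ^ 2 ≤ lam → ∀ T : E → E, Measurable T →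
      (∀ y, ‖T y - (y - α • Hc y)‖ ≤ K₀ * (α * √α) * ‖y‖ ^ 2) →
      ∀ π : Measure E, IsProbabilityMeasure π → Integrable (fun y => ‖y‖ ^ 2) π →
      ∫ y, ‖y‖ ^ 2 ∂π ≤ m → (π.prod ν).map (fun p => T p.1 + √α • p.2) = π →
      ∀ h : E → ℝ, LipschitzWith 1 h →
        |∫ y, h y ∂π - ∫ y, h y ∂γ| ≤ U * (√α * Real.log (1 / α)) := by
  have hC : 0 ≤ expMoment d := by linarith [one_le_expMoment (d := d)]
  set C := expMoment d with hCd
  set m1 := ∫ x, ‖x‖ ∂ν with hm1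
  set m3 := ∫ x, ‖x‖ ^ 3 ∂ν with hm3
  have hm1n : 0 ≤ m1 := integral_nonneg fun _ => norm_nonneg _
  have hm3n : 0 ≤ m3 := integral_nonneg fun _ => by positivity
  set c := lam / (4 * L) with hc
  have hcpos : 0 < c := by positivity
  refine ⟨K₀ * m / σ + (m1 + κ₁ * C) + 4 * ((4 * C * d ^ 2 * (bn * L ^ 2) * √c
    + 100 * C * (m3 + κ₁ ^ 3 * (6 * C))) / (c * σ)) + (1 + m + β * C) / σ, by positivity, ?_⟩
  intro α hα hα1 hαL hασ hαlam T hTm hT π hπP hπ2 hπm hinv h hh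
  obtain ⟨n, hn⟩ := rate (d := d) (D₀ := bn * L ^ 2) (τ₀ := m3 + κ₁ ^ 3 * (6 * C)) (m := m)
    (t₁ := m1 + κ₁ * C) (R := 1 + m + β * C) hα hα1 hσ hασ hcpos (by positivity)
    (by positivity) hK₀ hm (by positivity) (by positivity)
  refine le_trans ?_ hn
  have hsq : 0 < √α := Real.sqrt_pos.mpr hα
  have hss : √α * √α = α := Real.mul_self_sqrt hα.le
  set A : E →L[ℝ] E := ContinuousLinearMap.id ℝ E - α • Hc with hA
  have hAx : ∀ x, A x = x - α • Hc x := fun x => rfl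
  have hAs : ∀ x y, ⟪A x, y⟫ = ⟪x, A y⟫ := fun x y => by
    rw [hAx, hAx, inner_sub_left, inner_sub_right, inner_smul_left, inner_smul_right, hHs]; rfl
  have hHx : ∀ t, ⟪Hc t, t⟫ ≤ L * ‖t‖ ^ 2 := fun t => by
    refine (real_inner_le_norm _ _).trans ?_
    nlinarith [hHL t, norm_nonneg t]
  have hAi : ∀ t, ⟪A t, t⟫ = ‖t‖ ^ 2 - α * ⟪Hc t, t⟫ := fun t => by
    rw [hAx, inner_sub_left, inner_smul_left, real_inner_self_eq_norm_sq]; rfl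
  have hAn : ∀ x, ‖A x‖ ≤ (1 - α * σ) * ‖x‖ := by
    refine norm_le_of_quad (by linarith) hAs (fun x => ?_) fun x => ?_
    · rw [hAi]
      have := mul_le_mul_of_nonneg_left (hHx x) hα.le
      nlinarith [sq_nonneg ‖x‖]
    · rw [hAi]
      have := mul_le_mul_of_nonneg_left (hHσ x) hα.le
      linarith
  have hquad : ∀ p q, ⟪p, B q⟫ - ⟪A p, B (A q)⟫ = α * ⟪p, S q⟫ - α ^ 2 * ⟪Hc p, B (Hc q)⟫ := by
    intro p q
    rw [hLy, hAx, hAx]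
    simp only [map_sub, map_smul, inner_sub_left, inner_sub_right, real_inner_smul_left,
      inner_smul_right]
    ring
  have hAsq : ∀ t, ‖t‖ ^ 2 - ‖A t‖ ^ 2 ≤ 2 * α * L * ‖t‖ ^ 2 := fun t => by
    rw [hAx, norm_sub_sq_real, inner_smul_right, real_inner_comm]
    have := mul_le_mul_of_nonneg_left (hHx t) hα.le
    nlinarith [sq_nonneg ‖α • Hc t‖]
  have hHL2 : ∀ t, ‖Hc t‖ ^ 2 ≤ L ^ 2 * ‖t‖ ^ 2 := fun t => by
    rw [← mul_pow]; exact pow_le_pow_left₀ (norm_nonneg _) (hHL t) 2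
  set η := ν.map (fun x => √α • x) with hη
  have hηP : IsProbabilityMeasure η :=
    Measure.isProbabilityMeasure_map (by fun_prop)
  have hnorm : ∀ x : E, ‖√α • x‖ = √α * ‖x‖ := fun x => by
    rw [norm_smul, Real.norm_eq_abs, abs_of_pos hsq]
  have hmain := tele_sum hh (π := π) (η := η) (γ := γ) (T := T) (A := A) (B := B)
    (K := K₀ * (α * √α)) (ρ := 1 - α * σ) (m := m) (c := c) (β := β) (κ := √α * κ₁)
    (D := bn * L ^ 2 * α ^ 2) (τ := α * √α * m3) (τ₁ := √α * m1) hTm (by positivity)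
    (by positivity) (by linarith) (by nlinarith) hcpos hβ (by positivity) hAs hAn hB hBβ
    ?_ ?_ hπ2 hπm ?_ ?_ ?_ ?_ ?_ ?_ ?_ hγ n
  · refine hmain.trans (le_of_eq ?_)
    have e : α * √α * m3 + (√α * κ₁) ^ 3 * (6 * expMoment d)
        = (m3 + κ₁ ^ 3 * (6 * C)) * (α * √α) := by
      rw [mul_pow, pow_succ (√α), sq, hss]; ring
    rw [e, ← hCd]
    ring
  · intro t
    have h1 := mul_le_mul_of_nonneg_left (hAsq t) hcpos.le
    rw [hquad]
    have h2 := (hBβ (Hc t)).trans (mul_le_mul_of_nonneg_left (hHL2 t) (sq_nonneg β))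
    have h3 := mul_le_mul_of_nonneg_left h2 (sq_nonneg α)
    have h4 := mul_le_mul_of_nonneg_left (hSl t) hα.le
    have h5 : c * (2 * α * L * ‖t‖ ^ 2) = α * lam / 2 * ‖t‖ ^ 2 := by
      rw [hc]; field_simp; ring
    have h6 := mul_le_mul_of_nonneg_left hαlam (by positivity : 0 ≤ α / 2 * ‖t‖ ^ 2)
    rw [h5] at h1
    linarith
  · intro t
    rw [hquad, mul_pow, Real.sq_sqrt hα.le]
    have h1 : 0 ≤ ⟪Hc t, B (Hc t)⟫ := hB.inner_nonneg_right _
    have h2 := mul_le_mul_of_nonneg_left (hSk t) hα.le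
    have h3 := mul_nonneg (sq_nonneg α) h1
    linarith
  · rw [hη, integrable_map_measure (by fun_prop) (by fun_prop)]
    simp only [Function.comp_def, hnorm, mul_pow]
    exact hν3.const_mul _
  · intro p
    rw [hη, integral_map (by fun_prop) (by fun_prop)]
    simp only [inner_smul_right, integral_const_mul, hνm, mul_zero]
  · intro p q
    rw [hη, integral_map (by fun_prop) (by fun_prop), hquad]
    have e : ∀ x : E, ⟪p, √α • x⟫ * ⟪q, √α • x⟫ = α * (⟪p, x⟫ * ⟪q, x⟫) := fun x => by
      rw [inner_smul_right, inner_smul_right, mul_mul_mul_comm, hss]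
    simp only [e, integral_const_mul, hνc]
    have h1 : |⟪Hc p, B (Hc q)⟫| ≤ L * ‖p‖ * (bn * (L * ‖q‖)) := by
      refine (abs_real_inner_le_norm _ _).trans ?_
      gcongr
      · exact hHL p
      · exact (hBn _).trans (by gcongr; exact hHL q)
    rw [sub_sub_cancel, abs_mul, abs_of_nonneg (sq_nonneg α)]
    calc _ ≤ α ^ 2 * (L * ‖p‖ * (bn * (L * ‖q‖))) := by gcongr
      _ = _ := by ring
  · rw [hη, integral_map (by fun_prop) (by fun_prop)]
    simp only [hnorm, mul_pow, integral_const_mul]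
    rw [pow_succ (√α), sq, hss]
  · rw [hη, integral_map (by fun_prop) (by fun_prop)]
    simp only [hnorm, integral_const_mul]
    exact le_rfl
  · exact hT
  · have h1 : (π.prod η) = (π.prod ν).map (Prod.map id fun x => √α • x) := by
      rw [hη, ← Measure.map_prod_map _ _ measurable_id (by fun_prop), Measure.map_id]
    rw [h1, Measure.map_map (by fun_prop) (by fun_prop)]
    exact hinv

end Bound

/-! ### Existence of an invariant law -/

section Invariant

variable {d : ℕ}

local notation "E" => EuclideanSpace ℝ (Fin d)

/-- The canonical law of an i.i.d. noise sequence. -/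
noncomputable def noise (ν : Measure (EuclideanSpace ℝ (Fin d))) :
    Measure (ℕ → EuclideanSpace ℝ (Fin d)) :=
  Measure.infinitePi fun _ => ν

instance (ν : Measure E) [IsProbabilityMeasure ν] : IsProbabilityMeasure (noise ν) := by
  rw [noise]; infer_instance

/-- Prepending an independent noise variable to an i.i.d. sequence gives an i.i.d. sequence. -/
lemma noise_cons (ν : Measure E) [IsProbabilityMeasure ν] :
    ((noise ν).prod ν).map
      (fun p : (ℕ → E) × E => fun n : ℕ => Nat.casesOn (motive := fun _ => E) n p.2 p.1)
      = noise ν := by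
  have hmeas : Measurable
      (fun p : (ℕ → E) × E => fun n : ℕ => Nat.casesOn (motive := fun _ => E) n p.2 p.1) := by
    refine measurable_pi_lambda _ fun n => ?_
    cases n with
    | zero => exact measurable_snd
    | succ n => exact (measurable_pi_apply n).comp measurable_fst
  refine Measure.eq_infinitePi _ fun s t ht => ?_
  classical
  obtain ⟨N, hN⟩ : ∃ N, s ⊆ Finset.range (N + 1) :=
    ⟨s.sup id, fun i hi => Finset.mem_range.mpr (Nat.lt_succ_of_le (Finset.le_sup (f := id) hi))⟩
  set t' : ℕ → Set E := fun i => if i ∈ s then t i else Set.univ with ht'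
  have ht'm : ∀ i, MeasurableSet (t' i) := fun i => by
    simp only [ht']; split_ifs
    · exact ht i
    · exact MeasurableSet.univ
  have e1 : Set.pi (s : Set ℕ) t = Set.pi (Finset.range (N + 1) : Set ℕ) t' := by
    ext x
    simp only [Set.mem_pi, Finset.mem_coe, ht']
    constructor
    · intro h i _
      split_ifs with hi
      · exact h i hi
      · trivial
    · intro h i hi
      have := h i (hN hi)
      rwa [if_pos hi] at this
  have e2 : ∏ i ∈ s, ν (t i) = ∏ i ∈ Finset.range (N + 1), ν (t' i) := by
    rw [← Finset.prod_subset hN]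
    · exact Finset.prod_congr rfl fun i hi => by simp [ht', hi]
    · intro i _ hi
      simp [ht', hi]
  rw [e1, e2, Finset.prod_range_succ', Measure.map_apply hmeas
    (MeasurableSet.pi (Finset.range (N + 1)).countable_toSet fun i _ => ht'm i)]
  have e3 : (fun p : (ℕ → E) × E => fun n : ℕ => Nat.casesOn (motive := fun _ => E) n p.2 p.1) ⁻¹'
      Set.pi (Finset.range (N + 1) : Set ℕ) t'
      = (Set.pi (Finset.range N : Set ℕ) fun i => t' (i + 1)) ×ˢ t' 0 := by
    ext p
    simp only [Set.mem_preimage, Set.mem_pi, Finset.mem_coe, Finset.mem_range, Set.mem_prod]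
    constructor
    · intro h
      exact ⟨fun i hi => h (i + 1) (by omega), h 0 (by omega)⟩
    · rintro ⟨h1, h2⟩ i hi
      cases i with
      | zero => exact h2
      | succ i => exact h1 i (by omega)
  rw [e3, Measure.prod_prod, noise, Measure.infinitePi_pi _ fun i _ => ht'm _]

lemma noise_shift (ν : Measure E) [IsProbabilityMeasure ν] :
    (noise ν).map (fun ω => ((fun n => ω (n + 1) : ℕ → E), ω 0)) = (noise ν).prod ν := by
  conv_lhs => rw [← noise_cons ν]
  rw [Measure.map_map]
  · exact Measure.map_id
  · fun_prop
  · refine measurable_pi_lambda _ fun n => ?_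
    cases n with
    | zero => exact measurable_snd
    | succ n => exact (measurable_pi_apply n).comp measurable_fst

lemma noise_shift_preserving (ν : Measure E) [IsProbabilityMeasure ν] :
    MeasurePreserving (fun ω n => ω (n + 1) : (ℕ → E) → (ℕ → E)) (noise ν) (noise ν) := by
  refine ⟨by fun_prop, ?_⟩
  have h := congrArg Measure.fst (noise_shift ν)
  rw [Measure.fst_prod, Measure.fst, Measure.map_map measurable_fst (by fun_prop)] at h
  exact h

lemma noise_eval (ν : Measure E) [IsProbabilityMeasure ν] :
    (noise ν).map (fun ω => ω 0) = ν := by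
  have h := congrArg Measure.snd (noise_shift ν)
  rw [Measure.snd_prod, Measure.snd, Measure.map_map measurable_snd (by fun_prop)] at h
  exact h

/-- Stationary solution of `Z = T (Z ∘ shift) + c ξ₀`, by contraction in `L²`. -/
lemma exists_invariant {ν : Measure E} [IsProbabilityMeasure ν] (hν : MemLp id 2 ν)
    {T : E → E} {K : ℝ≥0} (hK : K < 1) (hT : LipschitzWith K T) (hT0 : T 0 = 0) (c : ℝ) :
    ∃ π : Measure E, IsProbabilityMeasure π ∧ MemLp id 2 π ∧
      (π.prod ν).map (fun p => T p.1 + c • p.2) = π := by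
  have hs := noise_shift_preserving ν
  have hξ : MemLp (fun ω : ℕ → E => c • ω 0) 2 (noise ν) := by
    have h1 : MemLp id 2 ((noise ν).map fun ω => ω 0) := by rwa [noise_eval]
    have h0 : Measurable fun ω : ℕ → E => ω 0 := measurable_pi_apply 0
    have h2 := (memLp_map_measure_iff measurable_id.aestronglyMeasurable h0.aemeasurable).mp h1
    exact h2.const_smul c
  set Φ : Lp E 2 (noise ν) → Lp E 2 (noise ν) := fun Z =>
    hT.compLp hT0 (Lp.compMeasurePreserving _ hs Z) + hξ.toLp with hΦ
  have hΦK : ContractingWith K Φ := by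
    refine ⟨hK, fun Z W => ?_⟩
    simp only [hΦ, edist_add_right]
    refine ((hT.lipschitzWith_compLp hT0) _ _).trans ?_
    rw [(Lp.isometry_compMeasurePreserving hs).edist_eq]
  set Z := ContractingWith.fixedPoint Φ hΦK
  have hZ : Φ Z = Z := hΦK.fixedPoint_isFixedPt
  obtain ⟨Z', hZ'm, hZ'⟩ : AEMeasurable Z (noise ν) := (Lp.aestronglyMeasurable Z).aemeasurable
  refine ⟨(noise ν).map Z', Measure.isProbabilityMeasure_map hZ'm.aemeasurable, ?_, ?_⟩
  · rw [memLp_map_measure_iff (by fun_prop) hZ'm.aemeasurable]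
    exact (memLp_congr_ae hZ').mp (Lp.memLp Z)
  · have h1 : (fun ω : ℕ → E => T (Z' fun n => ω (n + 1)) + c • ω 0) =ᵐ[noise ν] Z' := by
      have a1 := Lp.coeFn_add (hT.compLp hT0 (Lp.compMeasurePreserving _ hs Z)) hξ.toLp
      have a2 := hT.coeFn_compLp hT0 (Lp.compMeasurePreserving _ hs Z)
      have a3 := Lp.coeFn_compMeasurePreserving Z hs
      have a4 := hξ.coeFn_toLp
      have a5 : (Φ Z : (ℕ → E) → E) =ᵐ[noise ν] Z := by rw [hZ]
      have a6 := hs.quasiMeasurePreserving.ae_eq_comp hZ'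
      filter_upwards [a1, a2, a3, a4, a5, hZ', a6] with ω b1 b2 b3 b4 b5 b6 b7
      rw [← b6, ← b5]
      simp only [hΦ]
      rw [b1, Pi.add_apply, b2, Function.comp_apply, b3, b4, b7]
      rfl
    have hTm : Measurable T := hT.continuous.measurable
    have h2 : ((noise ν).map Z').prod ν
        = (noise ν).map (fun ω => (Z' fun n => ω (n + 1), ω 0)) := by
      have e : ((noise ν).map Z').prod ν = ((noise ν).prod ν).map (Prod.map Z' id) := by
        rw [← Measure.map_prod_map _ _ hZ'm measurable_id, Measure.map_id]
      rw [e, ← noise_shift, Measure.map_map (by fun_prop) (by fun_prop)]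
      rfl
    rw [h2, Measure.map_map (by fun_prop) (by fun_prop)]
    exact Measure.map_congr h1

end Invariant

/-! ### Uniqueness and second moment of the invariant law -/

section Contraction

variable {d : ℕ}

local notation "E" => EuclideanSpace ℝ (Fin d)

/-- One coupling estimate, iterated `n` times with shared noise: two stationary laws of a
contracting chain are indistinguishable for bounded Lipschitz tests up to a term vanishing
with `n`. -/
lemma coupling {ν π π' : Measure E} [IsProbabilityMeasure ν] [IsProbabilityMeasure π]
    [IsProbabilityMeasure π'] {T : E → E} {K : ℝ≥0} (hT : LipschitzWith K T) {c : ℝ}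
    (h : (π.prod ν).map (fun p => T p.1 + c • p.2) = π)
    (h' : (π'.prod ν).map (fun p => T p.1 + c • p.2) = π') (n : ℕ) :
    ∀ (g : E → ℂ) (l : ℝ), 0 ≤ l → (∀ x, ‖g x‖ ≤ 1) → (∀ x y, ‖g x - g y‖ ≤ l * ‖x - y‖) →
      ‖∫ x, g x ∂π - ∫ x, g x ∂π'‖ ≤ ∫ p, min 2 (l * K ^ n * ‖p.1 - p.2‖) ∂(π.prod π') := by
  have hTm : Measurable T := hT.continuous.measurable
  have hcont : ∀ (g : E → ℂ) (l : ℝ), 0 ≤ l → (∀ x y, ‖g x - g y‖ ≤ l * ‖x - y‖) →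
      Continuous g := fun g l hl hg =>
    (LipschitzWith.of_dist_le_mul (K := ⟨l, hl⟩) fun x y => by
      rw [dist_eq_norm, dist_eq_norm]; exact hg x y).continuous
  induction n with
  | zero =>
    intro g l hl hg1 hg
    have hgc := hcont g l hl hg
    have hgi : ∀ (μ : Measure E) [IsProbabilityMeasure μ], Integrable g μ := fun μ _ =>
      (integrable_const (1:ℝ)).mono' hgc.aestronglyMeasurable
        (Filter.Eventually.of_forall hg1)
    have e : ∫ x, g x ∂π - ∫ x, g x ∂π' = ∫ p, (g p.1 - g p.2) ∂(π.prod π') := by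
      rw [integral_sub ((hgi π).comp_fst π') ((hgi π').comp_snd π), integral_fun_fst,
        integral_fun_snd]
      simp
    rw [e]
    refine norm_integral_le_of_norm_le ?_ (Filter.Eventually.of_forall fun p => ?_)
    · refine (integrable_const (2:ℝ)).mono' (by fun_prop)
        (Filter.Eventually.of_forall fun p => ?_)
      rw [Real.norm_eq_abs, abs_of_nonneg (by positivity)]
      exact min_le_left _ _
    · refine le_min ?_ ?_
      · refine (norm_sub_le _ _).trans ?_
        linarith [hg1 p.1, hg1 p.2]
      · simpa using hg p.1 p.2
  | succ n ih =>
    intro g l hl hg1 hg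
    have hgc := hcont g l hl hg
    have hgi : ∀ x, Integrable (fun ξ => g (T x + c • ξ)) ν := fun x =>
      (integrable_const (1:ℝ)).mono' (by fun_prop) (Filter.Eventually.of_forall fun _ => hg1 _)
    have hpush : ∀ (μ : Measure E) [IsProbabilityMeasure μ],
        (μ.prod ν).map (fun p => T p.1 + c • p.2) = μ →
        ∫ x, g x ∂μ = ∫ x, ∫ ξ, g (T x + c • ξ) ∂ν ∂μ := fun μ _ hμ => by
      conv_lhs => rw [← hμ]
      rw [integral_map (by fun_prop) hgc.aestronglyMeasurable]
      refine integral_prod _ ((integrable_const (1:ℝ)).mono' (by fun_prop)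
        (Filter.Eventually.of_forall fun _ => hg1 _))
    rw [hpush π h, hpush π' h']
    have hm := ih (fun x => ∫ ξ, g (T x + c • ξ) ∂ν) (l * K) (by positivity)
      (fun x => by
        refine (norm_integral_le_of_norm_le (integrable_const (1:ℝ))
          (Filter.Eventually.of_forall fun _ => hg1 _)).trans ?_
        simp)
      (fun x y => by
        rw [← integral_sub (hgi x) (hgi y)]
        refine (norm_integral_le_of_norm_le (integrable_const (l * K * ‖x - y‖))
          (Filter.Eventually.of_forall fun ξ => ?_)).trans (by simp)
        refine (hg _ _).trans ?_
        rw [add_sub_add_right_eq_sub, mul_assoc]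
        gcongr
        have := hT.dist_le_mul x y
        rwa [dist_eq_norm, dist_eq_norm] at this)
    refine hm.trans (le_of_eq ?_)
    congr 1
    ext p
    rw [pow_succ]
    ring_nf

/-- Two invariant laws have the same characteristic function, by letting the number of coupled
steps tend to infinity. No moment assumption on the laws is needed, by dominated convergence with
the constant bound `2`. -/
lemma invariant_unique {ν π π' : Measure E} [IsProbabilityMeasure ν] [IsProbabilityMeasure π]
    [IsProbabilityMeasure π'] {T : E → E} {K : ℝ≥0} (hK : K < 1) (hT : LipschitzWith K T) {c : ℝ}
    (h : (π.prod ν).map (fun p => T p.1 + c • p.2) = π)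
    (h' : (π'.prod ν).map (fun p => T p.1 + c • p.2) = π') : π = π' := by
  refine Measure.ext_of_charFun (funext fun t => ?_)
  rw [charFun_apply, charFun_apply, ← sub_eq_zero, ← norm_le_zero_iff]
  have hb := fun n => coupling hT h h' n (fun x => Complex.exp ((⟪x, t⟫ : ℝ) * Complex.I)) ‖t‖
    (norm_nonneg _) (fun x => (Complex.norm_exp_ofReal_mul_I _).le) (fun x y => by
      have e : Complex.exp ((⟪x, t⟫ : ℝ) * Complex.I) - Complex.exp ((⟪y, t⟫ : ℝ) * Complex.I)
          = Complex.exp ((⟪y, t⟫ : ℝ) * Complex.I)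
            * (Complex.exp (Complex.I * ((⟪x - y, t⟫ : ℝ) : ℂ)) - 1) := by
        rw [mul_sub, ← Complex.exp_add, mul_one, inner_sub_left]
        congr 2
        push_cast; ring
      rw [e, norm_mul, Complex.norm_exp_ofReal_mul_I, one_mul]
      refine (Real.norm_exp_I_mul_ofReal_sub_one_le).trans ?_
      rw [Real.norm_eq_abs, mul_comm]
      exact abs_real_inner_le_norm _ _)
  have hlim : Filter.Tendsto
      (fun n : ℕ => ∫ p, min 2 (‖t‖ * (K:ℝ) ^ n * ‖p.1 - p.2‖) ∂(π.prod π'))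
      Filter.atTop (nhds (∫ _p : E × E, (0:ℝ) ∂(π.prod π'))) := by
    refine tendsto_integral_of_dominated_convergence (fun _ => (2:ℝ)) (fun n => by fun_prop)
      (integrable_const _) (fun n => Filter.Eventually.of_forall fun p => ?_)
      (Filter.Eventually.of_forall fun p => ?_)
    · rw [Real.norm_eq_abs, abs_of_nonneg (by positivity)]
      exact min_le_left _ _
    · have h1 : Filter.Tendsto (fun n : ℕ => (K:ℝ) ^ n) Filter.atTop (nhds 0) :=
        tendsto_pow_atTop_nhds_zero_of_lt_one K.2 (by exact_mod_cast hK)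
      have h2 := (h1.const_mul ‖t‖).mul_const ‖p.1 - p.2‖
      have h3 := (tendsto_const_nhds (x := (2:ℝ))).min h2
      simpa using h3
  rw [integral_zero] at hlim
  exact ge_of_tendsto' hlim hb

/-- The second moment is read off from stationarity: the cross term vanishes because the noise is
centred and independent of the state. -/
lemma second_moment {ν π : Measure E} [IsProbabilityMeasure ν] [IsProbabilityMeasure π]
    (hν2 : Integrable (fun x => ‖x‖ ^ 2) ν) (hν1 : Integrable (fun x => ‖x‖) ν)
    (hνm : ∀ p : E, ∫ x, ⟪p, x⟫ ∂ν = 0)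
    (hπ2 : Integrable (fun x => ‖x‖ ^ 2) π) {T : E → E} {K : ℝ} (hTm : Measurable T)
    (hT : ∀ y, ‖T y‖ ^ 2 ≤ K * ‖y‖ ^ 2) {c : ℝ}
    (h : (π.prod ν).map (fun p => T p.1 + c • p.2) = π) :
    (1 - K) * ∫ y, ‖y‖ ^ 2 ∂π ≤ c ^ 2 * ∫ y, ‖y‖ ^ 2 ∂ν := by
  have hT2 : Integrable (fun x => ‖T x‖ ^ 2) π :=
    (hπ2.const_mul K).mono' (by fun_prop) (Filter.Eventually.of_forall fun y => by
      rw [Real.norm_eq_abs, abs_of_nonneg (by positivity)]; exact hT y)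
  have hT1 : Integrable (fun x => ‖T x‖) π :=
    ((integrable_const (1:ℝ)).add hT2).mono' (by fun_prop)
      (Filter.Eventually.of_forall fun y => by
        rw [Real.norm_eq_abs, abs_norm, Pi.add_apply]; nlinarith [sq_nonneg (‖T y‖ - 1)])
  have hcross : Integrable (fun p : E × E => ⟪T p.1, p.2⟫) (π.prod ν) :=
    (hT1.mul_prod hν1).mono' (by fun_prop) (Filter.Eventually.of_forall fun p =>
      abs_real_inner_le_norm _ _)
  have h0 : ∫ p : E × E, ⟪T p.1, p.2⟫ ∂(π.prod ν) = 0 := by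
    rw [integral_prod _ hcross]
    simp [hνm]
  have h1 : ∫ y, ‖y‖ ^ 2 ∂π = ∫ y, ‖T y‖ ^ 2 ∂π + c ^ 2 * ∫ y, ‖y‖ ^ 2 ∂ν := by
    conv_lhs => rw [← h]
    rw [integral_map (by fun_prop) (by fun_prop)]
    have e : ∀ p : E × E, ‖T p.1 + c • p.2‖ ^ 2
        = (‖T p.1‖ ^ 2 + c ^ 2 * ‖p.2‖ ^ 2) + 2 * c * ⟪T p.1, p.2⟫ := fun p => by
      rw [norm_add_sq_real, inner_smul_right, norm_smul, mul_pow, Real.norm_eq_abs, sq_abs]; ring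
    simp only [e]
    have i1 : Integrable (fun p : E × E => ‖T p.1‖ ^ 2) (π.prod ν) := hT2.comp_fst ν
    have i2 : Integrable (fun p : E × E => c ^ 2 * ‖p.2‖ ^ 2) (π.prod ν) :=
      (hν2.comp_snd π).const_mul _
    have i3 : Integrable (fun p : E × E => ‖T p.1‖ ^ 2 + c ^ 2 * ‖p.2‖ ^ 2) (π.prod ν) := i1.add i2
    rw [integral_add i3 (hcross.const_mul _),
      integral_add i1 i2, integral_const_mul,
      integral_const_mul, h0, integral_fun_fst (fun x => ‖T x‖ ^ 2),
      integral_fun_snd (fun x => ‖x‖ ^ 2)]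
    simp
  have h2 : ∫ y, ‖T y‖ ^ 2 ∂π ≤ K * ∫ y, ‖y‖ ^ 2 ∂π := by
    rw [← integral_const_mul]
    exact integral_mono hT2 (hπ2.const_mul K) hT
  linarith

end Contraction

/-! ### The objective: contraction, Hessian and Taylor estimates -/

section Objective

variable {d : ℕ}

local notation "E" => EuclideanSpace ℝ (Fin d)

lemma strong_mono {f : E → ℝ} {σ : ℝ}
    (hsc : ∀ x y, f x + ⟪gradient f x, y - x⟫ + σ / 2 * ‖x - y‖ ^ 2 ≤ f y) (x y : E) :
    σ * ‖x - y‖ ^ 2 ≤ ⟪gradient f x - gradient f y, x - y⟫ := by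
  have h1 := hsc x y
  have h2 := hsc y x
  rw [norm_sub_rev y x] at h2
  have h3 : ⟪gradient f x, y - x⟫ = -⟪gradient f x, x - y⟫ := by
    rw [← inner_neg_right, neg_sub]
  rw [inner_sub_left]
  linarith

/-- Cocoercivity of the gradient of a convex `L`-smooth function. -/
lemma cocoercive {f : E → ℝ} {σ L : ℝ} (hσ : 0 < σ) (hL : 0 < L)
    (hsc : ∀ x y, f x + ⟪gradient f x, y - x⟫ + σ / 2 * ‖x - y‖ ^ 2 ≤ f y)
    (hsm : ∀ x y, f y ≤ f x + ⟪gradient f x, y - x⟫ + L / 2 * ‖x - y‖ ^ 2) (x y : E) :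
    ‖gradient f x - gradient f y‖ ^ 2 ≤ L * ⟪gradient f x - gradient f y, x - y⟫ := by
  -- compare both bounds at the gradient step `y - L⁻¹ (∇f y - ∇f x)`
  have key : ∀ x y : E, f x + ⟪gradient f x, y - x⟫
      + 1 / (2 * L) * ‖gradient f y - gradient f x‖ ^ 2 ≤ f y := by
    intro x y
    set D := gradient f y - gradient f x with hD
    have h1 := hsc x (y - L⁻¹ • D)
    have h2 := hsm y (y - L⁻¹ • D)
    have h3 : 0 ≤ σ / 2 * ‖x - (y - L⁻¹ • D)‖ ^ 2 := by positivity
    have e1 : ⟪gradient f x, y - L⁻¹ • D - x⟫ = ⟪gradient f x, y - x⟫ - L⁻¹ * ⟪gradient f x, D⟫ := by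
      rw [sub_right_comm, inner_sub_right, inner_smul_right]
    have e2 : ⟪gradient f y, y - L⁻¹ • D - y⟫ = - (L⁻¹ * ⟪gradient f y, D⟫) := by
      rw [sub_sub_cancel_left, inner_neg_right, inner_smul_right]
    have e3 : ‖y - (y - L⁻¹ • D)‖ ^ 2 = L⁻¹ ^ 2 * ‖D‖ ^ 2 := by
      rw [sub_sub_cancel, norm_smul, mul_pow, Real.norm_eq_abs, sq_abs]
    have e4 : ⟪gradient f y, D⟫ - ⟪gradient f x, D⟫ = ‖D‖ ^ 2 := by
      rw [← inner_sub_left, ← hD, real_inner_self_eq_norm_sq]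
    have e5 : L / 2 * (L⁻¹ ^ 2 * ‖D‖ ^ 2) = 1 / (2 * L) * ‖D‖ ^ 2 := by field_simp
    have e6 : L⁻¹ * ‖D‖ ^ 2 = 2 * (1 / (2 * L) * ‖D‖ ^ 2) := by field_simp
    rw [e1] at h1
    rw [e2, e3, e5] at h2
    have e7 : L⁻¹ * ⟪gradient f y, D⟫ - L⁻¹ * ⟪gradient f x, D⟫ = L⁻¹ * ‖D‖ ^ 2 := by
      rw [← mul_sub, e4]
    linarith
  have h1 := key x y
  have h2 := key y x
  rw [norm_sub_rev] at h1
  have h3 : ⟪gradient f x, y - x⟫ = -⟪gradient f x, x - y⟫ := by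
    rw [← inner_neg_right, neg_sub]
  have h4 : 2 * (1 / (2 * L) * ‖gradient f x - gradient f y‖ ^ 2)
      = ‖gradient f x - gradient f y‖ ^ 2 / L := by field_simp
  rw [inner_sub_left, ← div_le_iff₀' hL]
  linarith

lemma gradient_lip {f : E → ℝ} {σ L : ℝ} (hσ : 0 < σ) (hL : 0 < L)
    (hsc : ∀ x y, f x + ⟪gradient f x, y - x⟫ + σ / 2 * ‖x - y‖ ^ 2 ≤ f y)
    (hsm : ∀ x y, f y ≤ f x + ⟪gradient f x, y - x⟫ + L / 2 * ‖x - y‖ ^ 2) (x y : E) :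
    ‖gradient f x - gradient f y‖ ≤ L * ‖x - y‖ := by
  have h1 := cocoercive hσ hL hsc hsm x y
  have h2 := real_inner_le_norm (gradient f x - gradient f y) (x - y)
  by_contra! h
  have h3 := mul_le_mul_of_nonneg_left h2 hL.le
  have h4 : 0 < ‖gradient f x - gradient f y‖ :=
    lt_of_le_of_lt (by positivity) h
  nlinarith

/-- A gradient step with `α L ≤ 1` contracts squared distances by `1 - α σ`. -/
lemma step_contract {f : E → ℝ} {σ L α : ℝ} (hσ : 0 < σ) (hL : 0 < L) (hα : 0 < α)
    (hαL : α * L ≤ 1)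
    (hsc : ∀ x y, f x + ⟪gradient f x, y - x⟫ + σ / 2 * ‖x - y‖ ^ 2 ≤ f y)
    (hsm : ∀ x y, f y ≤ f x + ⟪gradient f x, y - x⟫ + L / 2 * ‖x - y‖ ^ 2) (x y : E) :
    ‖(x - α • gradient f x) - (y - α • gradient f y)‖ ^ 2 ≤ (1 - α * σ) * ‖x - y‖ ^ 2 := by
  have h1 := cocoercive hσ hL hsc hsm x y
  have h2 := strong_mono hsc x y
  have e : (x - α • gradient f x) - (y - α • gradient f y)
      = (x - y) - α • (gradient f x - gradient f y) := by
    rw [smul_sub]; abel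
  rw [e, norm_sub_sq_real, inner_smul_right, norm_smul, mul_pow, Real.norm_eq_abs, sq_abs,
    real_inner_comm]
  set D := gradient f x - gradient f y
  set I := ⟪D, x - y⟫ with hI
  have hI0 : 0 ≤ I := le_trans (by positivity) h2
  have h3 : α ^ 2 * ‖D‖ ^ 2 ≤ α * I := by
    calc α ^ 2 * ‖D‖ ^ 2 ≤ α ^ 2 * (L * I) := by gcongr
      _ = (α * L) * (α * I) := by ring
      _ ≤ 1 * (α * I) := by gcongr
      _ = α * I := one_mul _
  have h4 := mul_le_mul_of_nonneg_left h2 hα.le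
  linarith

/-- The Riesz isometry from the dual, as a genuinely linear map (Mathlib's version is semilinear
for the trivial conjugation of `ℝ`). -/
noncomputable def riesz : StrongDual ℝ (EuclideanSpace ℝ (Fin d)) →ₗᵢ[ℝ] EuclideanSpace ℝ (Fin d) where
  toFun := (InnerProductSpace.toDual ℝ (EuclideanSpace ℝ (Fin d))).symm
  map_add' := map_add _
  map_smul' c y := by simp
  norm_map' y := (InnerProductSpace.toDual ℝ (EuclideanSpace ℝ (Fin d))).symm.norm_map y

/-- The Hessian of `f` at `x`, as an operator: the derivative of the gradient. -/
noncomputable def hess (f : EuclideanSpace ℝ (Fin d) → ℝ) (x : EuclideanSpace ℝ (Fin d)) :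
    EuclideanSpace ℝ (Fin d) →L[ℝ] EuclideanSpace ℝ (Fin d) :=
  riesz.toContinuousLinearMap.comp (fderiv ℝ (fderiv ℝ f) x)

lemma inner_hess (f : E → ℝ) (x u v : E) : ⟪hess f x u, v⟫ = fderiv ℝ (fderiv ℝ f) x u v :=
  InnerProductSpace.toDual_symm_apply (𝕜 := ℝ) (y := fderiv ℝ (fderiv ℝ f) x u)

lemma hess_symm {f : E → ℝ} (hf : ContDiff ℝ 3 f) (x u v : E) :
    ⟪hess f x u, v⟫ = ⟪u, hess f x v⟫ := by
  rw [inner_hess, real_inner_comm, inner_hess]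
  exact (hf.contDiffAt.isSymmSndFDerivAt (by
    rw [minSmoothness_of_isRCLikeNormedField]; norm_num)) u v

lemma contDiff_fderiv {f : E → ℝ} (hf : ContDiff ℝ 3 f) : ContDiff ℝ 2 (fderiv ℝ f) :=
  hf.fderiv_right (by norm_num)

lemma continuous_gradient {f : E → ℝ} (hf : ContDiff ℝ 3 f) : Continuous (gradient f) :=
  (InnerProductSpace.toDual ℝ E).symm.continuous.comp (contDiff_fderiv hf).continuous

lemma hasFDerivAt_gradient {f : E → ℝ} (hf : ContDiff ℝ 3 f) (x : E) :
    HasFDerivAt (gradient f) (hess f x) x := by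
  have h1 : HasFDerivAt (fderiv ℝ f) (fderiv ℝ (fderiv ℝ f) x) x :=
    ((contDiff_fderiv hf).differentiable (by norm_num) x).hasFDerivAt
  exact riesz.toContinuousLinearMap.hasFDerivAt.comp x h1

lemma hess_norm_le {f : E → ℝ} (hf : ContDiff ℝ 3 f) {L : ℝ} (hL : 0 < L)
    (hg : ∀ x y, ‖gradient f x - gradient f y‖ ≤ L * ‖x - y‖) (x t : E) :
    ‖hess f x t‖ ≤ L * ‖t‖ := by
  have h1 : ‖hess f x‖ ≤ L := (hasFDerivAt_gradient hf x).le_of_lipschitz (C := ⟨L, hL.le⟩)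
    (LipschitzWith.of_dist_le_mul fun x y => by rw [dist_eq_norm, dist_eq_norm]; exact hg x y)
  exact ((hess f x).le_opNorm t).trans (by gcongr)

lemma hess_ge {f : E → ℝ} (hf : ContDiff ℝ 3 f) {σ : ℝ}
    (hg : ∀ x y, σ * ‖x - y‖ ^ 2 ≤ ⟪gradient f x - gradient f y, x - y⟫) (x t : E) :
    σ * ‖t‖ ^ 2 ≤ ⟪hess f x t, t⟫ := by
  have h1 : HasDerivAt (fun s : ℝ => ⟪gradient f (x + s • t), t⟫) ⟪hess f x t, t⟫ 0 := by
    have h2 : HasDerivAt (fun s : ℝ => x + s • t) t 0 := by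
      simpa using ((hasDerivAt_id (0:ℝ)).smul_const t).const_add x
    have h3 : HasFDerivAt (gradient f) (hess f x) (x + (0:ℝ) • t) := by
      simpa using hasFDerivAt_gradient hf x
    simpa using (h3.comp_hasDerivAt (0:ℝ) h2).inner ℝ (hasDerivAt_const (0:ℝ) t)
  have h2 := h1.tendsto_slope_zero_right
  refine ge_of_tendsto h2 ?_
  filter_upwards [self_mem_nhdsWithin] with s hs
  have hs : 0 < s := hs
  have h3 := hg (x + s • t) x
  rw [add_sub_cancel_left, norm_smul, inner_smul_right, mul_pow, Real.norm_eq_abs, sq_abs,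
    inner_sub_left] at h3
  simp only [zero_add, zero_smul, add_zero, smul_eq_mul]
  rw [← div_eq_inv_mul, le_div_iff₀ hs]
  nlinarith

/-- A bound on the entries of a trilinear form bounds its norm. -/
lemma norm_trilinear_le (m : E [×3]→L[ℝ] ℝ) {M : ℝ}
    (hM : ∀ i j k : Fin d, |m ![EuclideanSpace.single i 1, EuclideanSpace.single j 1,
      EuclideanSpace.single k 1]| ≤ M) : ‖m‖ ≤ d ^ 3 * |M| := by
  refine ContinuousMultilinearMap.opNorm_le_bound (by positivity) fun v => ?_
  have e1 : m v = ∑ r : Fin 3 → Fin d, (∏ k, v k (r k)) *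
      m (fun k => EuclideanSpace.single (r k) (1:ℝ)) := by
    have h1 : v = fun k => ∑ j, (v k j) • EuclideanSpace.single j (1:ℝ) := by
      funext k
      have := (EuclideanSpace.basisFun (Fin d) ℝ).sum_repr (v k)
      simpa using this.symm
    conv_lhs => rw [h1]
    rw [← ContinuousMultilinearMap.coe_coe, MultilinearMap.map_sum]
    refine Finset.sum_congr rfl fun r _ => ?_
    rw [MultilinearMap.map_smul_univ, smul_eq_mul]
  rw [e1]
  refine (norm_sum_le _ _).trans ?_
  have e2 : ∀ r : Fin 3 → Fin d, ‖(∏ k, v k (r k)) *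
      m (fun k => EuclideanSpace.single (r k) (1:ℝ))‖ ≤ |M| * ∏ k, ‖v k‖ := fun r => by
    rw [norm_mul, mul_comm]
    gcongr
    · have h2 : (fun k => EuclideanSpace.single (r k) (1:ℝ))
          = ![EuclideanSpace.single (r 0) 1, EuclideanSpace.single (r 1) 1,
            EuclideanSpace.single (r 2) 1] := by
        funext k; fin_cases k <;> rfl
      rw [h2, Real.norm_eq_abs]
      exact (hM _ _ _).trans (le_abs_self M)
    · rw [Real.norm_eq_abs, Finset.abs_prod]
      exact Finset.prod_le_prod (fun _ _ => abs_nonneg _) fun k _ => abs_coord_le _ _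
  refine (Finset.sum_le_sum fun r _ => e2 r).trans (le_of_eq ?_)
  rw [Finset.sum_const, Finset.card_univ, Fintype.card_fun, Fintype.card_fin, Fintype.card_fin,
    nsmul_eq_mul]
  push_cast; ring

/-- Second-order Taylor estimate for the gradient, from bounded third partials. -/
lemma gradient_taylor {f : E → ℝ} (hf : ContDiff ℝ 3 f) {M : ℝ}
    (hM : ∀ x : E, ∀ i j k : Fin d,
      |iteratedFDeriv ℝ 3 f x ![EuclideanSpace.single i 1, EuclideanSpace.single j 1,
        EuclideanSpace.single k 1]| ≤ M) (x z : E) :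
    ‖gradient f (x + z) - gradient f x - hess f x z‖ ≤ d ^ 3 * |M| * ‖z‖ ^ 2 := by
  set K : ℝ := d ^ 3 * |M| with hK
  have hK0 : 0 ≤ K := by positivity
  have h2 : ∀ y w : E, ‖iteratedFDeriv ℝ 2 f y - iteratedFDeriv ℝ 2 f w‖ ≤ K * ‖y - w‖ :=
    fun y w => convex_univ.norm_image_sub_le_of_norm_fderiv_le (𝕜 := ℝ)
      (fun u _ => hf.differentiable_iteratedFDeriv (by norm_num) u)
      (fun u _ => by rw [norm_fderiv_iteratedFDeriv]; exact norm_trilinear_le _ (hM u))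
      (Set.mem_univ w) (Set.mem_univ y)
  have h3 : ∀ y w : E, ‖fderiv ℝ (fderiv ℝ f) y - fderiv ℝ (fderiv ℝ f) w‖ ≤ K * ‖y - w‖ := by
    intro y w
    refine ContinuousLinearMap.opNorm_le_bound₂ _ (by positivity) fun u v => ?_
    have e := (iteratedFDeriv ℝ 2 f y - iteratedFDeriv ℝ 2 f w).le_opNorm ![u, v]
    rw [_root_.sub_apply, iteratedFDeriv_two_apply, iteratedFDeriv_two_apply,
      Fin.prod_univ_two] at e
    simp only [Matrix.cons_val_zero, Matrix.cons_val_one] at e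
    rw [_root_.sub_apply, _root_.sub_apply, mul_assoc (K * ‖y - w‖)]
    exact e.trans (by gcongr; exact h2 y w)
  have h4 : ‖gradient f (x + z) - gradient f x - hess f x (x + z - x)‖
      ≤ K * ‖z‖ * ‖x + z - x‖ := by
    refine (convex_closedBall x ‖z‖).norm_image_sub_le_of_norm_hasFDerivWithin_le' (𝕜 := ℝ)
      (f' := hess f) (fun y _ => (hasFDerivAt_gradient hf y).hasFDerivWithinAt) (fun y hy => ?_)
      (Metric.mem_closedBall_self (norm_nonneg z)) (by simp)
    have e : hess f y - hess f x
        = riesz.toContinuousLinearMap.comp (fderiv ℝ (fderiv ℝ f) y - fderiv ℝ (fderiv ℝ f) x) := by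
      rw [ContinuousLinearMap.comp_sub]; rfl
    have hy' : ‖y - x‖ ≤ ‖z‖ := by rwa [Metric.mem_closedBall, dist_eq_norm] at hy
    rw [e]
    refine ContinuousLinearMap.opNorm_le_bound _ (by positivity) fun u => ?_
    rw [ContinuousLinearMap.comp_apply]
    refine (le_of_eq (riesz.norm_map _)).trans ?_
    refine (ContinuousLinearMap.le_opNorm _ _).trans ?_
    gcongr
    exact (h3 y x).trans (by gcongr)
  rw [add_sub_cancel_left] at h4
  calc _ ≤ _ := h4
    _ = _ := by ring

end Objective

/-! ### From Lipschitz tests to half-lines -/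

section Tail

variable {d : ℕ}

local notation "E" => EuclideanSpace ℝ (Fin d)

lemma map_inner_eq_gaussianReal {γ : Measure E} [IsProbabilityMeasure γ] {B : E →L[ℝ] E}
    (hγ : IsG γ fun t => ⟪t, B t⟫) {ζ : E} (hζ : 0 ≤ ⟪ζ, B ζ⟫) :
    γ.map (fun y => ⟪y, ζ⟫) = gaussianReal 0 (⟪ζ, B ζ⟫).toNNReal := by
  have : IsProbabilityMeasure (γ.map (fun y => ⟪y, ζ⟫)) :=
    Measure.isProbabilityMeasure_map (by fun_prop)
  refine Measure.ext_of_charFun (funext fun s => ?_)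
  rw [charFun_gaussianReal, charFun_apply, integral_map (by fun_prop) (by fun_prop)]
  have h := hγ (s • ζ)
  rw [charFun_apply] at h
  have e : ∀ y : E, ⟪⟪y, ζ⟫, s⟫ = ⟪y, s • ζ⟫ := fun y => by
    rw [inner_smul_right]; simp
  simp only [e]
  rw [h]
  congr 1
  beta_reduce
  rw [map_smul, inner_smul_right, real_inner_smul_left, Real.coe_toNNReal _ hζ]
  push_cast
  ring

/-- A Gaussian density on `[a/2, ∞)` is at most `4 √v / a²`. -/
lemma gaussianReal_Ioc_le {v : ℝ≥0} (hv : v ≠ 0) {a b c : ℝ} (ha : 0 < a) (hb : a / 2 ≤ b)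
    (hbc : b ≤ c) :
    (gaussianReal 0 v).real (Set.Ioc b c) ≤ 4 * √v / a ^ 2 * (c - b) := by
  have hv0 : (0:ℝ) < v := by exact_mod_cast pos_iff_ne_zero.mpr hv
  have hpdf : ∀ x ∈ Set.Ioc b c, gaussianPDFReal 0 v x ≤ 4 * √v / a ^ 2 := by
    intro x hx
    have hx2 : a / 2 ≤ x := hb.trans hx.1.le
    have hx0 : 0 < x := by linarith
    rw [gaussianPDFReal, sub_zero]
    have h1 : Real.exp (-x ^ 2 / (2 * v)) ≤ 2 * v / x ^ 2 := by
      rw [neg_div, Real.exp_neg, inv_le_comm₀ (Real.exp_pos _) (by positivity), inv_div]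
      linarith [Real.add_one_le_exp (x ^ 2 / (2 * v))]
    have h2 : (√(2 * Real.pi * v))⁻¹ ≤ (2 * √v)⁻¹ := by
      refine inv_anti₀ (by positivity) ?_
      refine Real.le_sqrt_of_sq_le ?_
      rw [mul_pow, Real.sq_sqrt hv0.le]
      nlinarith [Real.pi_gt_three]
    have h3 : x ^ 2 ≥ a ^ 2 / 4 := by nlinarith
    calc _ ≤ (2 * √v)⁻¹ * (2 * v / x ^ 2) := by gcongr
      _ ≤ (2 * √v)⁻¹ * (2 * v / (a ^ 2 / 4)) := by gcongr
      _ = 4 * ((√v)⁻¹ * v) / a ^ 2 := by field_simp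
      _ = 4 * √v / a ^ 2 := by
        congr 2
        nth_rewrite 2 [← Real.mul_self_sqrt hv0.le]
        have : √(v:ℝ) ≠ 0 := (Real.sqrt_pos.mpr hv0).ne'
        field_simp
  rw [Measure.real, gaussianReal_apply _ hv]
  refine ENNReal.toReal_le_of_le_ofReal (mul_nonneg (by positivity) (by linarith)) ?_
  calc ∫⁻ x in Set.Ioc b c, gaussianPDF 0 v x
      ≤ ∫⁻ _ in Set.Ioc b c, ENNReal.ofReal (4 * √v / a ^ 2) :=
        setLIntegral_mono (by fun_prop) fun x hx => ENNReal.ofReal_le_ofReal (hpdf x hx)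
    _ = _ := by
      rw [setLIntegral_const, Real.volume_Ioc, ENNReal.ofReal_mul (by positivity)]

/-- Passage from Lipschitz tests to half-lines, through the ramp of width `δ` above `b`. -/
lemma ramp {μ : Measure E} [IsProbabilityMeasure μ] (ζ : E) (b : ℝ) {δ : ℝ} (hδ : 0 ≤ δ) :
    δ * μ.real {y | b + δ < ⟪y, ζ⟫} ≤ ∫ y, min δ (max 0 (⟪y, ζ⟫ - b)) ∂μ ∧
      ∫ y, min δ (max 0 (⟪y, ζ⟫ - b)) ∂μ ≤ δ * μ.real {y | b < ⟪y, ζ⟫} := by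
  have hm : ∀ r : ℝ, MeasurableSet {y : E | r < ⟪y, ζ⟫} := fun r =>
    measurableSet_lt measurable_const (by fun_prop)
  have hi : Integrable (fun y : E => min δ (max 0 (⟪y, ζ⟫ - b))) μ :=
    (integrable_const δ).mono' (by fun_prop) (Filter.Eventually.of_forall fun y => by
      rw [Real.norm_eq_abs, abs_of_nonneg (le_min hδ (le_max_left _ _))]
      exact min_le_left _ _)
  have hI : ∀ r : ℝ, ∫ y, {y : E | r < ⟪y, ζ⟫}.indicator (fun _ => δ) y ∂μ
      = δ * μ.real {y | r < ⟪y, ζ⟫} := fun r => by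
    rw [integral_indicator_const _ (hm r), smul_eq_mul, mul_comm]
  have hIi : ∀ r : ℝ, Integrable ({y : E | r < ⟪y, ζ⟫}.indicator (fun _ => δ)) μ := fun r =>
    (integrable_const δ).indicator (hm r)
  constructor
  · rw [← hI]
    refine integral_mono (hIi _) hi fun y => ?_
    by_cases hy : b + δ < ⟪y, ζ⟫
    · rw [Set.indicator_of_mem (by exact hy)]
      exact le_min le_rfl (le_max_of_le_right (by linarith))
    · rw [Set.indicator_of_notMem (by exact hy)]
      exact le_min hδ (le_max_left _ _)
  · rw [← hI]
    refine integral_mono hi (hIi _) fun y => ?_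
    by_cases hy : b < ⟪y, ζ⟫
    · rw [Set.indicator_of_mem (by exact hy)]
      exact min_le_left _ _
    · rw [Set.indicator_of_notMem (by exact hy)]
      refine (min_le_right _ _).trans (max_le le_rfl (by push Not at hy; linarith))

lemma ramp_lip {ζ : E} (hζ : ‖ζ‖ = 1) (b δ : ℝ) :
    LipschitzWith 1 fun y : E => min δ (max 0 (⟪y, ζ⟫ - b)) := by
  have h1 : LipschitzWith 1 fun y : E => ⟪y, ζ⟫ - b := by
    refine LipschitzWith.of_dist_le_mul fun x y => ?_
    rw [Real.dist_eq, dist_eq_norm, sub_sub_sub_cancel_right, ← inner_sub_left]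
    refine (abs_real_inner_le_norm _ _).trans (le_of_eq ?_)
    rw [hζ]; simp
  exact (h1.const_max 0).const_min δ

/-- A Wasserstein bound `W` against a centred Gaussian law controls the tails beyond `a`: the
indicator is sandwiched between ramps of width `a s`, which costs `W / (a s)`, and the Gaussian
mass of an interval of that length beyond `a / 2` is at most `4 β s / a`, the density there being
`O(β / a²)`. -/
lemma tail_bound {π γ : Measure E} [IsProbabilityMeasure π] [IsProbabilityMeasure γ] {W : ℝ}
    (hW : ∀ h : E → ℝ, LipschitzWith 1 h → |∫ y, h y ∂π - ∫ y, h y ∂γ| ≤ W) {B : E →L[ℝ] E}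
    (hγ : IsG γ fun t => ⟪t, B t⟫) {ζ : E} (hζ : ‖ζ‖ = 1) (hpos : 0 < ⟪ζ, B ζ⟫) {β : ℝ}
    (hβ : 0 ≤ β) (hBβ : ⟪ζ, B ζ⟫ ≤ β ^ 2) {a s : ℝ} (ha : 0 < a) (hs : 0 < s) (hs2 : s ≤ 1 / 2) :
    |π.real {y | a < ⟪y, ζ⟫} - (gaussianReal 0 (⟪ζ, B ζ⟫).toNNReal).real (Set.Ioi a)|
      ≤ (W / s + 4 * β * s) / a := by
  set v := (⟪ζ, B ζ⟫).toNNReal with hv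
  have hv0 : v ≠ 0 := by rw [hv]; simpa using hpos
  have hg := map_inner_eq_gaussianReal hγ hpos.le
  rw [← hv] at hg
  have hγr : ∀ r, γ.real {y | r < ⟪y, ζ⟫} = (gaussianReal 0 v).real (Set.Ioi r) := fun r => by
    rw [← hg, map_measureReal_apply (by fun_prop) measurableSet_Ioi]
    rfl
  set δ := a * s with hδ
  have hδ0 : 0 < δ := by positivity
  have hδa : δ ≤ a / 2 := by rw [hδ]; nlinarith
  have hvβ : √v ≤ β := by
    rw [hv, Real.coe_toNNReal _ hpos.le]
    exact Real.sqrt_le_iff.mpr ⟨hβ, hBβ⟩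
  have hIcc : ∀ b, a / 2 ≤ b → (gaussianReal 0 v).real (Set.Ioi b)
      ≤ (gaussianReal 0 v).real (Set.Ioi (b + δ)) + 4 * β / a ^ 2 * δ := fun b hb => by
    have h1 := gaussianReal_Ioc_le hv0 ha hb (le_add_of_nonneg_right hδ0.le : b ≤ b + δ)
    have h2 : Set.Ioi b = Set.Ioc b (b + δ) ∪ Set.Ioi (b + δ) :=
      (Set.Ioc_union_Ioi_eq_Ioi (by linarith)).symm
    have h3 := measureReal_union_le (μ := gaussianReal 0 v) (Set.Ioc b (b + δ)) (Set.Ioi (b + δ))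
    rw [← h2] at h3
    rw [add_sub_cancel_left] at h1
    have h4 : 4 * √v / a ^ 2 * δ ≤ 4 * β / a ^ 2 * δ := by gcongr
    linarith
  have e : (W / s + 4 * β * s) / a = W / δ + 4 * β / a ^ 2 * δ := by
    rw [hδ]; field_simp
  rw [e, abs_le]
  constructor
  · obtain ⟨-, u1⟩ := ramp (μ := π) ζ a hδ0.le
    obtain ⟨l1, -⟩ := ramp (μ := γ) ζ a hδ0.le
    have h1 := (abs_le.mp (hW _ (ramp_lip hζ a δ))).1
    have h2 := hIcc a (by linarith)
    rw [hγr] at l1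
    have h3 : (gaussianReal 0 v).real (Set.Ioi (a + δ)) - W / δ ≤ π.real {y | a < ⟪y, ζ⟫} := by
      refine le_of_mul_le_mul_left ?_ hδ0
      rw [mul_sub, mul_div_cancel₀ _ hδ0.ne']
      linarith
    linarith
  · obtain ⟨l1, -⟩ := ramp (μ := π) ζ (a - δ) hδ0.le
    obtain ⟨-, u1⟩ := ramp (μ := γ) ζ (a - δ) hδ0.le
    have h1 := (abs_le.mp (hW _ (ramp_lip hζ (a - δ) δ))).2
    have h2 := hIcc (a - δ) (by linarith)
    rw [hγr] at u1
    rw [sub_add_cancel] at h2 l1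
    have h3 : π.real {y | a < ⟪y, ζ⟫} ≤ (gaussianReal 0 v).real (Set.Ioi (a - δ)) + W / δ := by
      refine le_of_mul_le_mul_left ?_ hδ0
      rw [mul_add, mul_div_cancel₀ _ hδ0.ne']
      linarith
    linarith

end Tail

/-! ### Matrices and elementary estimates -/

section Assembly

variable {d : ℕ}

local notation "E" => EuclideanSpace ℝ (Fin d)

lemma exists_lower_bound (hd : 1 ≤ d) (V : E →L[ℝ] E) (hV : ∀ t, t ≠ 0 → 0 < ⟪t, V t⟫) :
    ∃ lam, 0 < lam ∧ ∀ t, lam * ‖t‖ ^ 2 ≤ ⟪t, V t⟫ := by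
  have : Nonempty (Fin d) := ⟨⟨0, hd⟩⟩
  obtain ⟨u, hu, hmin⟩ := (isCompact_sphere (0:E) 1).exists_isMinOn
    (NormedSpace.sphere_nonempty.mpr zero_le_one)
    (f := fun t => ⟪t, V t⟫) (by fun_prop)
  have hu1 : ‖u‖ = 1 := by simpa using hu
  refine ⟨⟪u, V u⟫, hV u (by intro h; simp [h] at hu1), fun t => ?_⟩
  by_cases ht : t = 0
  · simp [ht]
  have ht' : 0 < ‖t‖ := norm_pos_iff.mpr ht
  have h1 := hmin (show ‖t‖⁻¹ • t ∈ Metric.sphere (0:E) 1 by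
    simp [norm_smul, ht'.ne'])
  simp only [Set.mem_ofPred_eq, map_smul, inner_smul_right, real_inner_smul_left] at h1
  calc _ ≤ ‖t‖⁻¹ * (‖t‖⁻¹ * ⟪t, V t⟫) * ‖t‖ ^ 2 := by gcongr
    _ = ⟪t, V t⟫ := by field_simp

lemma quad_le (V : E →L[ℝ] E) (t : E) : ⟪t, V t⟫ ≤ √‖V‖ ^ 2 * ‖t‖ ^ 2 := by
  rw [Real.sq_sqrt (norm_nonneg _)]
  refine (real_inner_le_norm _ _).trans ?_
  nlinarith [V.le_opNorm t, norm_nonneg t]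

lemma inner_clm (A : Matrix (Fin d) (Fin d) ℝ) (x y : E) :
    ⟪x, Matrix.toEuclideanCLM (𝕜 := ℝ) A y⟫ = ∑ i, ∑ j, x i * y j * A i j := by
  rw [inner_eq_sum_coord]
  refine Finset.sum_congr rfl fun i _ => ?_
  rw [Matrix.ofLp_toEuclideanCLM, Matrix.mulVec, dotProduct, Finset.mul_sum]
  refine Finset.sum_congr rfl fun j _ => by ring

lemma posDef_pos {A : Matrix (Fin d) (Fin d) ℝ} (hA : A.PosDef) (t : E) (ht : t ≠ 0) :
    0 < ⟪t, Matrix.toEuclideanCLM (𝕜 := ℝ) A t⟫ := by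
  have h := hA.dotProduct_mulVec_pos (x := t.ofLp) (by simpa using ht)
  rw [Matrix.inner_toEuclideanCLM]
  simpa using h

lemma posDef_symm {A : Matrix (Fin d) (Fin d) ℝ} (hA : A.PosDef) (x y : E) :
    ⟪Matrix.toEuclideanCLM (𝕜 := ℝ) A x, y⟫ = ⟪x, Matrix.toEuclideanCLM (𝕜 := ℝ) A y⟫ := by
  rw [real_inner_comm, inner_clm, inner_clm, Finset.sum_comm]
  refine Finset.sum_congr rfl fun i _ => Finset.sum_congr rfl fun j _ => ?_
  have : A j i = A i j := by simpa using hA.1.apply i j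
  rw [this]; ring

lemma hess_eq_matrix {f : E → ℝ} (hf : ContDiff ℝ 3 f) {x : E} {H : Matrix (Fin d) (Fin d) ℝ}
    (hH : ∀ i j, H i j = iteratedFDeriv ℝ 2 f x
      ![EuclideanSpace.single i 1, EuclideanSpace.single j 1]) :
    Matrix.toEuclideanCLM (𝕜 := ℝ) H = hess f x := by
  have hHij : ∀ i j, H i j = hess f x (EuclideanSpace.single i 1) j := fun i j => by
    rw [hH, iteratedFDeriv_two_apply]
    simp only [Matrix.cons_val_zero, Matrix.cons_val_one]
    rw [← inner_hess, EuclideanSpace.inner_single_right]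
    simp
  refine ContinuousLinearMap.ext fun q => ?_
  ext i
  have h1 : hess f x q i = ⟪hess f x (EuclideanSpace.single i 1), q⟫ := by
    rw [hess_symm hf, EuclideanSpace.inner_single_left]
    simp
  rw [h1, inner_eq_sum_coord, Matrix.ofLp_toEuclideanCLM, Matrix.mulVec, dotProduct]
  exact Finset.sum_congr rfl fun j _ => by rw [hHij]

/-- The Lyapunov equation for matrices as an identity of bilinear forms involving the Hessian
operator. -/
lemma lyapunov_clm {f : E → ℝ} (hf : ContDiff ℝ 3 f) {x : E} {H SY S : Matrix (Fin d) (Fin d) ℝ}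
    (hH : ∀ i j, H i j = iteratedFDeriv ℝ 2 f x
      ![EuclideanSpace.single i 1, EuclideanSpace.single j 1])
    (hLyap : H * SY + SY * Hᵀ = S) (p q : E) :
    ⟪p, Matrix.toEuclideanCLM (𝕜 := ℝ) S q⟫
      = ⟪hess f x p, Matrix.toEuclideanCLM (𝕜 := ℝ) SY q⟫
        + ⟪p, Matrix.toEuclideanCLM (𝕜 := ℝ) SY (hess f x q)⟫ := by
  have hsymm : Hᵀ = H := by
    ext i j
    rw [Matrix.transpose_apply, hH, hH, iteratedFDeriv_two_apply, iteratedFDeriv_two_apply]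
    simp only [Matrix.cons_val_zero, Matrix.cons_val_one]
    rw [← inner_hess, ← inner_hess, hess_symm hf, real_inner_comm]
  rw [← hLyap, hsymm, map_add, map_mul, map_mul, hess_eq_matrix hf hH, _root_.add_apply,
    inner_add_right, hess_symm hf]
  rfl

lemma sqrt_mul_log_le {α : ℝ} (hα : 0 < α) : √α * Real.log (1 / α) ≤ 2 := by
  have hs : 0 < √α := Real.sqrt_pos.mpr hα
  have e : Real.log (1 / α) = 2 * Real.log (1 / √α) := by
    rw [one_div, one_div, Real.log_inv, Real.log_inv, Real.log_sqrt hα.le]; ring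
  have h := Real.log_le_sub_one_of_pos (x := 1 / √α) (by positivity)
  rw [e]
  calc √α * (2 * Real.log (1 / √α)) ≤ √α * (2 * (1 / √α - 1)) := by gcongr
    _ = 2 * (1 - √α) := by field_simp
    _ ≤ 2 := by linarith

lemma sqrt_sqrt_mul {α ℓ : ℝ} (hα : 0 < α) : √(√α * ℓ) = α ^ ((1:ℝ)/4) * √ℓ := by
  rw [Real.sqrt_mul (Real.sqrt_nonneg _), Real.sqrt_eq_rpow α, Real.sqrt_eq_rpow (α ^ _),
    ← Real.rpow_mul hα.le]
  norm_num

end Assembly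

/-! ### Rescaling the SGD chain -/

section Rescaling

variable {d : ℕ}

local notation "E" => EuclideanSpace ℝ (Fin d)

lemma noise_mean {ν : Measure E} [IsProbabilityMeasure ν] (h1 : Integrable (fun x => ‖x‖) ν)
    (hmean : (∫ x, x ∂ν) = 0) (p : E) : ∫ x, ⟪p, x⟫ ∂ν = 0 := by
  have hi : Integrable (fun x : E => x) ν :=
    (integrable_norm_iff (by fun_prop)).mp h1
  rw [integral_inner hi, hmean, inner_zero_right]

lemma noise_cov {ν : Measure E} [IsProbabilityMeasure ν] (h2 : Integrable (fun x => ‖x‖ ^ 2) ν)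
    {S : Matrix (Fin d) (Fin d) ℝ} (hcov : ∀ i j, (∫ x : E, x i * x j ∂ν) = S i j) (p q : E) :
    ∫ x, ⟪p, x⟫ * ⟪q, x⟫ ∂ν = ⟪p, Matrix.toEuclideanCLM (𝕜 := ℝ) S q⟫ := by
  have e : ∀ x : E, ⟪p, x⟫ * ⟪q, x⟫ = ∑ i, ∑ j, p i * q j * (x i * x j) := fun x => by
    rw [inner_eq_sum_coord, inner_eq_sum_coord, Finset.sum_mul_sum]
    exact Finset.sum_congr rfl fun i _ => Finset.sum_congr rfl fun j _ => by ring
  have hi := integrable_coord_mul h2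
  simp_rw [e]
  rw [inner_clm, integral_finsetSum _ fun i _ =>
    integrable_finsetSum _ fun j _ => (hi i j).const_mul _]
  refine Finset.sum_congr rfl fun i _ => ?_
  rw [integral_finsetSum _ fun j _ => (hi i j).const_mul _]
  exact Finset.sum_congr rfl fun j _ => by rw [integral_const_mul, hcov]

lemma isG_of_charFun {γ : Measure E} {SY : Matrix (Fin d) (Fin d) ℝ}
    (hγ : ∀ t : E, (∫ x, Complex.exp (Complex.I * ((⟪t, x⟫ : ℝ) : ℂ)) ∂γ)
        = Complex.exp (-(1/2 : ℂ) * ((⟪t, Matrix.toEuclideanLin SY t⟫ : ℝ) : ℂ))) :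
    IsG γ fun t => ⟪t, Matrix.toEuclideanCLM (𝕜 := ℝ) SY t⟫ := fun t => by
  rw [charFun_apply]
  calc _ = ∫ x, Complex.exp (Complex.I * ((⟪t, x⟫ : ℝ) : ℂ)) ∂γ := by
        refine integral_congr_ae (Filter.Eventually.of_forall fun x => ?_)
        beta_reduce
        rw [real_inner_comm, mul_comm]
    _ = _ := by
        rw [hγ]
        congr 1
        rw [show Matrix.toEuclideanLin SY t = Matrix.toEuclideanCLM (𝕜 := ℝ) SY t from rfl]
        ring

lemma gradient_min {f : E → ℝ} {x : E} (h : ∀ y, f x ≤ f y) : gradient f x = 0 := by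
  have : IsLocalMin f x := Filter.Eventually.of_forall h
  rw [gradient, this.fderiv_eq_zero, map_zero]

/-- The noiseless SGD step in the variable `y = (x - x₀) / √α`. -/
noncomputable def rstep (f : EuclideanSpace ℝ (Fin d) → ℝ) (x₀ : EuclideanSpace ℝ (Fin d))
    (α : ℝ) (y : EuclideanSpace ℝ (Fin d)) : EuclideanSpace ℝ (Fin d) :=
  y - √α • gradient f (x₀ + √α • y)

/-- Undoing the rescaling turns `rstep` into the gradient step with stepsize `α`. -/
lemma smul_rstep (f : E → ℝ) (x₀ : E) {α : ℝ} (hα : 0 ≤ α) (y : E) :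
    x₀ + √α • rstep f x₀ α y = (x₀ + √α • y) - α • gradient f (x₀ + √α • y) := by
  rw [rstep, smul_sub, smul_smul, Real.mul_self_sqrt hα, add_sub_assoc]

lemma rstep_zero {f : E → ℝ} {x₀ : E} (h : gradient f x₀ = 0) (α : ℝ) : rstep f x₀ α 0 = 0 := by
  simp [rstep, h]

lemma rstep_sub_sq {f : E → ℝ} {σ L α : ℝ} (hσ : 0 < σ) (hL : 0 < L) (hα : 0 < α)
    (hαL : α * L ≤ 1)
    (hsc : ∀ x y, f x + ⟪gradient f x, y - x⟫ + σ / 2 * ‖x - y‖ ^ 2 ≤ f y)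
    (hsm : ∀ x y, f y ≤ f x + ⟪gradient f x, y - x⟫ + L / 2 * ‖x - y‖ ^ 2) (x₀ y z : E) :
    ‖rstep f x₀ α y - rstep f x₀ α z‖ ^ 2 ≤ (1 - α * σ) * ‖y - z‖ ^ 2 := by
  have h := step_contract hσ hL hα hαL hsc hsm (x₀ + √α • y) (x₀ + √α • z)
  rw [← smul_rstep f x₀ hα.le, ← smul_rstep f x₀ hα.le, add_sub_add_left_eq_sub,
    add_sub_add_left_eq_sub, ← smul_sub, ← smul_sub, norm_smul, norm_smul, mul_pow, mul_pow,
    Real.norm_eq_abs, sq_abs, Real.sq_sqrt hα.le] at h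
  refine le_of_mul_le_mul_left ?_ hα
  linarith

lemma rstep_taylor {f : E → ℝ} (hf : ContDiff ℝ 3 f) {M : ℝ}
    (hM : ∀ x : E, ∀ i j k : Fin d,
      |iteratedFDeriv ℝ 3 f x ![EuclideanSpace.single i 1, EuclideanSpace.single j 1,
        EuclideanSpace.single k 1]| ≤ M) {x₀ : E} (h0 : gradient f x₀ = 0) {α : ℝ} (hα : 0 < α)
    (y : E) :
    ‖rstep f x₀ α y - (y - α • hess f x₀ y)‖ ≤ d ^ 3 * |M| * (α * √α) * ‖y‖ ^ 2 := by
  have h := gradient_taylor hf hM x₀ (√α • y)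
  have e : rstep f x₀ α y - (y - α • hess f x₀ y)
      = -(√α • (gradient f (x₀ + √α • y) - gradient f x₀ - hess f x₀ (√α • y))) := by
    rw [rstep, h0, map_smul, sub_zero, smul_sub, smul_smul, Real.mul_self_sqrt hα.le]
    abel
  rw [norm_smul, mul_pow, Real.norm_eq_abs, sq_abs, Real.sq_sqrt hα.le] at h
  rw [e, norm_neg, norm_smul, Real.norm_eq_abs, abs_of_nonneg (Real.sqrt_nonneg α)]
  calc _ ≤ √α * (d ^ 3 * |M| * (α * ‖y‖ ^ 2)) := by gcongr
    _ = _ := by ring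

lemma lipschitz_of_sq {T : E → E} {q : ℝ} (hq : 0 ≤ q)
    (h : ∀ y z, ‖T y - T z‖ ^ 2 ≤ q * ‖y - z‖ ^ 2) :
    LipschitzWith (√q).toNNReal T :=
  LipschitzWith.of_dist_le_mul fun y z => by
    rw [Real.coe_toNNReal _ (Real.sqrt_nonneg q), dist_eq_norm, dist_eq_norm]
    refine abs_le_of_sq_le_sq' ?_ (by positivity) |>.2
    rw [mul_pow, Real.sq_sqrt hq]
    exact h y z

lemma toNNReal_sqrt_lt_one {q : ℝ} (hq : q < 1) : (√q).toNNReal < 1 := by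
  rw [Real.toNNReal_lt_one, Real.sqrt_lt' one_pos]
  simpa using hq

/-- The SGD chain has exactly one invariant law; its image under `x ↦ (x - x₀) / √α` is an
invariant law of the rescaled chain, with second moment at most `∫ ‖x‖² dν / σ`. -/
lemma sgd_invariant {f : E → ℝ} {σ L α : ℝ} (hσ : 0 < σ) (hL : 0 < L) (hα : 0 < α)
    (hαL : α * L ≤ 1) (hασ : α * σ < 1) (hf : ContDiff ℝ 3 f)
    (hsc : ∀ x y, f x + ⟪gradient f x, y - x⟫ + σ / 2 * ‖x - y‖ ^ 2 ≤ f y)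
    (hsm : ∀ x y, f y ≤ f x + ⟪gradient f x, y - x⟫ + L / 2 * ‖x - y‖ ^ 2) {x₀ : E}
    (h0 : gradient f x₀ = 0) {ν : Measure E} [IsProbabilityMeasure ν]
    (hν1 : Integrable (fun x => ‖x‖) ν) (hν2 : Integrable (fun x => ‖x‖ ^ 2) ν)
    (hνm : ∀ p : E, ∫ x, ⟪p, x⟫ ∂ν = 0) :
    ∃ μ π : Measure E, IsProbabilityMeasure μ ∧ IsProbabilityMeasure π ∧
      (μ.prod ν).map (fun p : E × E => p.1 + α • (-(gradient f p.1) + p.2)) = μ ∧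
      (∀ μ' : Measure E, IsProbabilityMeasure μ' →
        (μ'.prod ν).map (fun p : E × E => p.1 + α • (-(gradient f p.1) + p.2)) = μ' → μ' = μ) ∧
      μ.map (fun x => (√α)⁻¹ • (x - x₀)) = π ∧
      Integrable (fun y => ‖y‖ ^ 2) π ∧ ∫ y, ‖y‖ ^ 2 ∂π ≤ (∫ x, ‖x‖ ^ 2 ∂ν) / σ ∧
      (π.prod ν).map (fun p => rstep f x₀ α p.1 + √α • p.2) = π := by
  have hq : 0 ≤ 1 - α * σ := by linarith
  have hq1 : 1 - α * σ < 1 := by nlinarith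
  have hs : √α ≠ 0 := (Real.sqrt_pos.mpr hα).ne'
  have hgc := continuous_gradient hf
  have hgm : Measurable (gradient f) := hgc.measurable
  have hTlip := lipschitz_of_sq hq (rstep_sub_sq hσ hL hα hαL hsc hsm x₀)
  have hνL : MemLp id 2 ν := (memLp_two_iff_integrable_sq_norm (by fun_prop)).mpr hν2
  obtain ⟨π, hπ, hπL, hπi⟩ := exists_invariant hνL (toNNReal_sqrt_lt_one hq1) hTlip
    (rstep_zero h0 α) (√α)
  have hπ2 : Integrable (fun y => ‖y‖ ^ 2) π :=
    (memLp_two_iff_integrable_sq_norm (by fun_prop)).mp hπL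
  have hTm : Measurable (rstep f x₀ α) := hTlip.continuous.measurable
  have hm := second_moment hν2 hν1 hνm hπ2 (K := 1 - α * σ) hTm (fun y => by
    simpa [rstep_zero h0 α] using rstep_sub_sq hσ hL hα hαL hsc hsm x₀ y 0) hπi
  rw [Real.sq_sqrt hα.le, sub_sub_cancel] at hm
  have hm' : ∫ y, ‖y‖ ^ 2 ∂π ≤ (∫ x, ‖x‖ ^ 2 ∂ν) / σ := by
    rw [le_div_iff₀ hσ]
    refine le_of_mul_le_mul_left ?_ hα
    linarith
  set Φ : E → E := fun y => x₀ + √α • y with hΦ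
  have hΦm : Measurable Φ := by fun_prop
  set F : E × E → E := fun p => p.1 + α • (-(gradient f p.1) + p.2) with hF
  have hFm : Measurable F := by fun_prop
  have hF' : F = fun p => (fun x => x - α • gradient f x) p.1 + α • p.2 := by
    funext p
    simp only [hF, smul_add, smul_neg]
    abel
  have hinv : ((π.map Φ).prod ν).map F = π.map Φ := by
    have e1 : (π.map Φ).prod ν = (π.prod ν).map (Prod.map Φ id) := by
      rw [← Measure.map_prod_map _ _ hΦm measurable_id, Measure.map_id]
    have e2 : F ∘ Prod.map Φ id = Φ ∘ fun p => rstep f x₀ α p.1 + √α • p.2 := by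
      funext p
      simp only [hF', Function.comp_apply, Prod.map_fst, Prod.map_snd, id, hΦ]
      rw [← smul_rstep f x₀ hα.le, smul_add, smul_smul, Real.mul_self_sqrt hα.le, add_assoc]
    rw [e1, Measure.map_map hFm (by fun_prop), e2, ← Measure.map_map hΦm (by fun_prop), hπi]
  have hΦp : IsProbabilityMeasure (π.map Φ) := Measure.isProbabilityMeasure_map hΦm.aemeasurable
  refine ⟨π.map Φ, π, hΦp, hπ, hinv, fun μ' hμ' h' => ?_, ?_, hπ2, hm', hπi⟩
  · rw [hF'] at h' hinv
    exact invariant_unique (toNNReal_sqrt_lt_one hq1)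
      (lipschitz_of_sq hq (step_contract hσ hL hα hαL hsc hsm)) h' hinv
  · rw [Measure.map_map (by fun_prop) hΦm]
    have : (fun x => (√α)⁻¹ • (x - x₀)) ∘ Φ = id := by
      funext y
      simp [hΦ, smul_smul, inv_mul_cancel₀ hs]
    rw [this, Measure.map_id]

end Rescaling

end SGD

/-- constant-stepsize SGD, i.i.d. noise.
For a thrice differentiable, `L`-smooth, `σ`-strongly convex objective with bounded third
partials and unique minimizer `x*`, i.i.d. noise law `ν` with mean zero, covariance `Σ ≻ 0`
and finite third moment, Hessian `H := ∇²f(x*)` and `Σ_Y ≻ 0` solving `HΣ_Y + Σ_Y Hᵀ = Σ`,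
there exist `α' > 0` and constants `U₁, U₁'` such that for all `α ∈ (0,α')` the SGD chain has
a unique invariant law `μ_α`, and the law `π_α` of `(X−x*)/√α` satisfies the Wasserstein-1
bound `U₁ α^{1/2} log(1/α)` against `N(0,Σ_Y)` and the non-uniform Berry–Esseen tail bound
`U₁' α^{1/4} (log(1/α))^{1/2}/a` for one-dimensional projections. -/
theorem stmt15 {d : ℕ} (hd : 1 ≤ d)
    (f : EuclideanSpace ℝ (Fin d) → ℝ) (σ L M : ℝ)
    (hσ : 0 < σ) (hσL : σ < L)
    (hf : ContDiff ℝ 3 f)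
    (hsc : ∀ x y, f x + ⟪gradient f x, y - x⟫ + σ / 2 * ‖x - y‖ ^ 2 ≤ f y)
    (hsm : ∀ x y, f y ≤ f x + ⟪gradient f x, y - x⟫ + L / 2 * ‖x - y‖ ^ 2)
    (hM : ∀ x : EuclideanSpace ℝ (Fin d), ∀ i j k : Fin d,
      |iteratedFDeriv ℝ 3 f x
        ![EuclideanSpace.single i 1, EuclideanSpace.single j 1, EuclideanSpace.single k 1]| ≤ M)
    (xstar : EuclideanSpace ℝ (Fin d))
    (hmin : ∀ x, f xstar ≤ f x)
    (hminuniq : ∀ x, (∀ y, f x ≤ f y) → x = xstar)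
    (ν : Measure (EuclideanSpace ℝ (Fin d))) [IsProbabilityMeasure ν]
    (S : Matrix (Fin d) (Fin d) ℝ) (hS : S.PosDef)
    (hmean : (∫ x, x ∂ν) = 0)
    (hcov : ∀ i j, (∫ x, x i * x j ∂ν) = S i j)
    (hm3 : Integrable (fun x => ‖x‖ ^ 3) ν)
    (H : Matrix (Fin d) (Fin d) ℝ)
    (hH : ∀ i j, H i j = iteratedFDeriv ℝ 2 f xstar
      ![EuclideanSpace.single i 1, EuclideanSpace.single j 1])
    (SY : Matrix (Fin d) (Fin d) ℝ) (hSY : SY.PosDef)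
    (hLyap : H * SY + SY * Hᵀ = S)
    (γ : Measure (EuclideanSpace ℝ (Fin d))) [IsProbabilityMeasure γ]
    (hγ : ∀ t : EuclideanSpace ℝ (Fin d),
      (∫ x, Complex.exp (Complex.I * ((⟪t, x⟫ : ℝ) : ℂ)) ∂γ)
        = Complex.exp (-(1/2 : ℂ) * ((⟪t, Matrix.toEuclideanLin SY t⟫ : ℝ) : ℂ))) :
    ∃ α' : ℝ, 0 < α' ∧ ∃ U₁ U₁' : ℝ, ∀ α ∈ Set.Ioo (0:ℝ) α',
      ∃ μα : Measure (EuclideanSpace ℝ (Fin d)), IsProbabilityMeasure μα ∧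
        Measure.map (fun p : EuclideanSpace ℝ (Fin d) × EuclideanSpace ℝ (Fin d) =>
          p.1 + α • (-(gradient f p.1) + p.2)) (μα.prod ν) = μα ∧
        (∀ μ' : Measure (EuclideanSpace ℝ (Fin d)), IsProbabilityMeasure μ' →
          Measure.map (fun p : EuclideanSpace ℝ (Fin d) × EuclideanSpace ℝ (Fin d) =>
            p.1 + α • (-(gradient f p.1) + p.2)) (μ'.prod ν) = μ' → μ' = μα) ∧
        (∀ h : EuclideanSpace ℝ (Fin d) → ℝ, LipschitzWith 1 h →
          |(∫ y, h y ∂(Measure.map (fun x => (Real.sqrt α)⁻¹ • (x - xstar)) μα))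
              - ∫ y, h y ∂γ|
            ≤ U₁ * (Real.sqrt α * Real.log (1/α))) ∧
        (∀ ζ : EuclideanSpace ℝ (Fin d), ‖ζ‖ = 1 → ∀ a : ℝ, 0 < a →
          |((Measure.map (fun x => (Real.sqrt α)⁻¹ • (x - xstar)) μα)
              {y | a < ⟪y, ζ⟫}).toReal
            - ((ProbabilityTheory.gaussianReal 0
                  (⟪ζ, Matrix.toEuclideanLin SY ζ⟫ : ℝ).toNNReal) (Set.Ioi a)).toReal|
            ≤ U₁' * (α ^ ((1:ℝ)/4) * Real.sqrt (Real.log (1/α)) / a)) := by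
  have hL : 0 < L := hσ.trans hσL
  have hν1 := SGD.integrable_norm_of_cube hm3
  have hν2 := SGD.integrable_sq_of_cube hm3
  have hνm := SGD.noise_mean hν1 hmean
  have hνc := SGD.noise_cov hν2 hcov
  have hγG := SGD.isG_of_charFun hγ
  have h0 : gradient f xstar = 0 := SGD.gradient_min hmin
  have hBsymm := SGD.posDef_symm hSY
  have hBpos := SGD.posDef_pos hSY
  have hLy := SGD.lyapunov_clm hf hH hLyap
  obtain ⟨lam, hlam, hSl⟩ := SGD.exists_lower_bound hd _ (SGD.posDef_pos hS)
  set B := Matrix.toEuclideanCLM (𝕜 := ℝ) SY with hB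
  set S' := Matrix.toEuclideanCLM (𝕜 := ℝ) S with hS'
  have hBP : B.IsPositive := SGD.isPositive_of hBsymm fun x => by
    by_cases hx : x = 0
    · simp [hx]
    · exact (hBpos x hx).le
  set β := √‖B‖ with hβ
  have hm2 : 0 ≤ (∫ x, ‖x‖ ^ 2 ∂ν) / σ :=
    div_nonneg (integral_nonneg fun _ => by positivity) hσ.le
  obtain ⟨U, hU0, hU⟩ := SGD.wass_const (Hc := SGD.hess f xstar) (B := B) (S := S')
    (ν := ν) (γ := γ) (K₀ := d ^ 3 * |M|) (bn := ‖B‖) (κ₁ := √‖S'‖) (β := β) hσ hL hlam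
    (Real.sqrt_nonneg _) (norm_nonneg _) (Real.sqrt_nonneg _) (by positivity) hm2
    (SGD.hess_symm hf xstar) (SGD.hess_ge hf (SGD.strong_mono hsc) xstar)
    (SGD.hess_norm_le hf hL (SGD.gradient_lip hσ hL hsc hsm) xstar) hBP (SGD.quad_le B)
    B.le_opNorm hLy hSl (SGD.quad_le S') hm3 hνm hνc hγG
  have hden : 0 < 2 * β ^ 2 * L ^ 2 + 1 := by positivity
  refine ⟨min (Real.exp (-1)) (min (1 / L) (lam / (2 * β ^ 2 * L ^ 2 + 1))),
    lt_min (Real.exp_pos _) (lt_min (by positivity) (by positivity)), U, 3 * U + 4 * β / 3, ?_⟩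
  rintro α ⟨hα, hα'⟩
  obtain ⟨hα1, hα2⟩ := lt_min_iff.mp hα'
  obtain ⟨hα2, hα3⟩ := lt_min_iff.mp hα2
  have hlog : 1 ≤ Real.log (1 / α) := by
    rw [one_div, Real.log_inv]
    have := Real.log_lt_log hα hα1
    rw [Real.log_exp] at this
    linarith
  have hαL : α * L ≤ 1 := ((lt_div_iff₀ hL).mp hα2).le
  have hασ : α * σ < 1 := lt_of_lt_of_le (mul_lt_mul_of_pos_left hσL hα) hαL
  have hαβ : 2 * α * β ^ 2 * L ^ 2 ≤ lam := by
    have := (lt_div_iff₀ hden).mp hα3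
    linarith
  obtain ⟨μ, π, hμ, hπ, hinv, huniq, hmap, hπ2, hπm, hπi⟩ :=
    SGD.sgd_invariant hσ hL hα hαL hασ hf hsc hsm h0 hν1 hν2 hνm
  have hTm : Measurable (SGD.rstep f xstar α) := by
    have := (SGD.continuous_gradient hf).measurable
    unfold SGD.rstep
    fun_prop
  have hW := hU α hα hlog hαL hασ hαβ _ hTm (SGD.rstep_taylor hf hM h0 hα) π hπ hπ2 hπm hπi
  refine ⟨μ, hμ, hinv, huniq, ?_, ?_⟩
  · rw [hmap]
    exact hW
  intro ζ hζ a ha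
  rw [hmap]
  have hζ0 : ζ ≠ 0 := fun h => by simp [h] at hζ
  have hw : 0 < √α * Real.log (1 / α) := mul_pos (Real.sqrt_pos.mpr hα) (by linarith)
  have hr : 0 < √(√α * Real.log (1 / α)) := Real.sqrt_pos.mpr hw
  have hr2 : √(√α * Real.log (1 / α)) ≤ 3 / 2 := by
    refine Real.sqrt_le_iff.mpr ⟨by norm_num, ?_⟩
    linarith [SGD.sqrt_mul_log_le hα]
  have hBζ : ⟪ζ, B ζ⟫ ≤ β ^ 2 := by
    have := SGD.quad_le B ζ
    rwa [hζ, one_pow, mul_one] at this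
  -- with `w := √α log (1/α)`, a ramp width `s ∝ √w` balances the error terms `U w / s` and `4 β s`
  have h := SGD.tail_bound (β := β) (s := √(√α * Real.log (1 / α)) / 3) hW hγG hζ (hBpos ζ hζ0)
    (Real.sqrt_nonneg _) hBζ ha (by positivity) (by linarith)
  refine h.trans (le_of_eq ?_)
  rw [← SGD.sqrt_sqrt_mul hα]
  set r := √(√α * Real.log (1 / α)) with hrdef
  have hrr : √α * Real.log (1 / α) = r ^ 2 := (Real.sq_sqrt hw.le).symm
  rw [hrr]
  field_simp
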